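/- arXiv:2203.00098 — 6 statements merged into one kernel-verified Lean document; each statement's English description precedes it below -/
import Mathlib

section
/- For every odd integer p ≥ 5 there exist constants c ∈ (0,1) and C ≥ 1, depending only on p, with the following property: for all integers k₁, …, k_p, with k := k₁ − k₂ + ⋯ + k_p and Φ := k² − k₁² + k₂² − ⋯ − k_p², at least one of the following holds: (A) there is exactly one odd index ℓ with k_ℓ = k; (B) |Φ| ≥ c · k₁*; (C) (k₃*)² ≥ c · k₁* or k₁* ≤ C · k₂*. -/
open scoped BigOperators

/-!
Let `a` be the largest frequency, with sign `ε`, and let `r`, `q` be the signed sums of the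
remaining frequencies and of their squares, so that `k = ε a + r` and `Φ = k² - ε a² - q`.
If Case C fails, then `b`, the second largest frequency, is small compared with `a`, and `m²` is
small compared with `a`, where `m` is the third largest absolute value.

If `ε = -1`, then `Φ = k² + a² - q`, and `q = O(b²)` is dominated by `a²`.
If `ε = 1`, then `Φ = r (2 a + r) - q`. Either `r = 0`, and then `k = a` is attained only at the
largest frequency; or `|r| ≥ 1`, and since `b` equals `± r` up to `O(m)` we get
`q = O(r² + m²)`, which is dominated by `|r (2 a + r)| ≳ |r| |a|`.
-/

lemma abs_units_mul (u : ℤˣ) (n : ℤ) : |(u : ℤ) * n| = |n| := by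
  rw [abs_mul, Int.isUnit_iff_abs_eq.1 u.isUnit, one_mul]

section SignedSum

variable {ι : Type*} (ε : ι → ℤˣ) (x : ι → ℤ)

/-- The sum of the integers `x i`, `i ∈ s`, weighted by the signs `ε i`. For the signs `(-1) ^ i`
it is the external frequency `k` of the internal frequencies `x`; applied to `x ^ 2` it gives the
quadratic part of the phase `Φ`. -/
def signedSum (s : Finset ι) : ℤ :=
  ∑ i ∈ s, ε i * x i

/-- The resonance function (phase) `Φ = k² - ∑ ε i (x i)²` of the frequencies `x i`, `i ∈ s`, with
signs `ε i`, where `k` is their signed sum. -/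
def resonance (s : Finset ι) : ℤ :=
  signedSum ε x s ^ 2 - signedSum ε (x ^ 2) s

variable {ε x} {s : Finset ι} {i₀ i₁ : ι} {B m : ℤ}

lemma abs_signedSum_le (h : ∀ i ∈ s, |x i| ≤ B) : |signedSum ε x s| ≤ s.card * B := by
  refine (Finset.abs_sum_le_sum_abs _ _).trans ?_
  rw [← nsmul_eq_mul]
  refine Finset.sum_le_card_nsmul _ _ _ fun i hi => ?_
  rw [abs_units_mul]
  exact h i hi

lemma abs_signedSum_sq_le (h : ∀ i ∈ s, |x i| ≤ B) :
    |signedSum ε (x ^ 2) s| ≤ s.card * B ^ 2 :=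
  abs_signedSum_le fun i hi => by
    rw [Pi.pow_apply, abs_pow]
    exact pow_le_pow_left₀ (abs_nonneg _) (h i hi) 2

variable [DecidableEq ι]

lemma signedSum_eq_add_erase (hi : i₀ ∈ s) :
    signedSum ε x s = ε i₀ * x i₀ + signedSum ε x (s.erase i₀) :=
  (Finset.add_sum_erase s (fun i => ε i * x i) hi).symm

lemma resonance_eq_of_sign_one (hi : i₀ ∈ s) (hε : ε i₀ = 1) :
    resonance ε x s =
      signedSum ε x (s.erase i₀) * (2 * x i₀ + signedSum ε x (s.erase i₀)) -
        signedSum ε (x ^ 2) (s.erase i₀) := by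
  rw [resonance, signedSum_eq_add_erase hi, signedSum_eq_add_erase (x := x ^ 2) hi, hε,
    Pi.pow_apply, Units.val_one]
  ring

lemma resonance_eq_of_sign_neg_one (hi : i₀ ∈ s) (hε : ε i₀ = -1) :
    resonance ε x s =
      signedSum ε x s ^ 2 + x i₀ ^ 2 - signedSum ε (x ^ 2) (s.erase i₀) := by
  rw [resonance, signedSum_eq_add_erase (x := x ^ 2) hi, hε, Pi.pow_apply, Units.val_neg,
    Units.val_one]
  ring

lemma abs_signedSum_sq_le_of_forall_erase (hi : i₁ ∈ s) (hm : ∀ i ∈ s.erase i₁, |x i| ≤ m) :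
    |signedSum ε (x ^ 2) s| ≤ 2 * signedSum ε x s ^ 2 + 3 * (s.card : ℤ) ^ 2 * m ^ 2 := by
  have hcard : ((s.erase i₁).card : ℤ) ≤ s.card := by
    exact_mod_cast Finset.card_le_card (Finset.erase_subset _ _)
  have hcard_sq : (s.card : ℤ) ≤ (s.card : ℤ) ^ 2 := Int.le_self_sq _
  set t := signedSum ε x (s.erase i₁)
  have ht : t ^ 2 ≤ (s.card : ℤ) ^ 2 * m ^ 2 :=
    calc t ^ 2 ≤ ((s.erase i₁).card * m) ^ 2 :=
          sq_le_sq.2 ((abs_signedSum_le hm).trans (le_abs_self _))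
      _ = ((s.erase i₁).card : ℤ) ^ 2 * m ^ 2 := mul_pow _ _ _
      _ ≤ (s.card : ℤ) ^ 2 * m ^ 2 := by gcongr
  have hb : x i₁ ^ 2 ≤ 2 * signedSum ε x s ^ 2 + 2 * t ^ 2 := by
    have hx : x i₁ ^ 2 = (signedSum ε x s - t) ^ 2 := by
      rw [signedSum_eq_add_erase hi, add_sub_cancel_right, mul_pow, ← Units.val_pow_eq_pow_val,
        Int.units_sq, Units.val_one, one_mul]
    rw [hx]
    linarith [sq_nonneg (signedSum ε x s + t)]
  have htail : |signedSum ε (x ^ 2) (s.erase i₁)| ≤ (s.card : ℤ) ^ 2 * m ^ 2 :=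
    (abs_signedSum_sq_le hm).trans (by gcongr; exact hcard.trans hcard_sq)
  calc |signedSum ε (x ^ 2) s|
      ≤ |(ε i₁ : ℤ) * (x ^ 2) i₁| + |signedSum ε (x ^ 2) (s.erase i₁)| := by
        rw [signedSum_eq_add_erase hi]
        exact abs_add_le _ _
    _ = x i₁ ^ 2 + |signedSum ε (x ^ 2) (s.erase i₁)| := by
        rw [abs_units_mul, Pi.pow_apply, abs_sq]
    _ ≤ 2 * signedSum ε x s ^ 2 + 3 * (s.card : ℤ) ^ 2 * m ^ 2 := by linarith

lemma abs_le_abs_resonance_of_sign_one (h₀ : i₀ ∈ s) (hε : ε i₀ = 1) (h₁ : i₁ ∈ s.erase i₀)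
    (hm : ∀ i ∈ (s.erase i₀).erase i₁, |x i| ≤ m)
    (hmx : 16 * (s.card : ℤ) ^ 2 * m ^ 2 ≤ |x i₀|)
    (hr : signedSum ε x (s.erase i₀) ≠ 0) (hrx : 16 * |signedSum ε x (s.erase i₀)| ≤ |x i₀|) :
    |x i₀| ≤ |resonance ε x s| := by
  rw [resonance_eq_of_sign_one h₀ hε]
  set r := signedSum ε x (s.erase i₀)
  set q := signedSum ε (x ^ 2) (s.erase i₀)
  have hq : 16 * |q| ≤ 32 * |r| ^ 2 + 3 * |x i₀| :=
    calc 16 * |q| ≤ 16 * (2 * r ^ 2 + 3 * ((s.erase i₀).card : ℤ) ^ 2 * m ^ 2) := by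
          gcongr
          exact abs_signedSum_sq_le_of_forall_erase h₁ hm
      _ ≤ 16 * (2 * r ^ 2 + 3 * (s.card : ℤ) ^ 2 * m ^ 2) := by
          gcongr
          exact Finset.erase_subset _ _
      _ ≤ 32 * |r| ^ 2 + 3 * |x i₀| := by
          rw [sq_abs]
          linarith
  have hmain : |r| * (2 * |x i₀| - |r|) ≤ |r * (2 * x i₀ + r)| := by
    rw [abs_mul]
    gcongr
    simpa [abs_mul] using abs_sub_abs_le_abs_sub (2 * x i₀) (-r)
  have hlead : 29 * |x i₀| ≤ |r| * (16 * (2 * |x i₀| - 3 * |r|)) :=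
    calc 29 * |x i₀| ≤ |r| * (29 * |x i₀|) :=
          le_mul_of_one_le_left (by positivity) (Int.one_le_abs hr)
      _ ≤ |r| * (16 * (2 * |x i₀| - 3 * |r|)) :=
          mul_le_mul_of_nonneg_left (by linarith) (abs_nonneg r)
  linarith [abs_sub_abs_le_abs_sub (r * (2 * x i₀ + r)) q, abs_nonneg (x i₀)]

lemma abs_le_two_mul_abs_resonance_of_sign_neg_one (h₀ : i₀ ∈ s) (hε : ε i₀ = -1)
    (hB₀ : 0 ≤ B) (hB : ∀ i ∈ s.erase i₀, |x i| ≤ B) (hBx : 2 * s.card * B ≤ |x i₀|) :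
    |x i₀| ≤ 2 * |resonance ε x s| := by
  have hq : 2 * |signedSum ε (x ^ 2) (s.erase i₀)| ≤ x i₀ ^ 2 :=
    calc 2 * |signedSum ε (x ^ 2) (s.erase i₀)|
        ≤ 2 * ((s.erase i₀).card * B ^ 2) := by gcongr; exact abs_signedSum_sq_le hB
      _ ≤ 2 * ((s.card : ℤ) ^ 2 * B ^ 2) := by
          gcongr
          exact (Nat.cast_le.2 (Finset.card_le_card (Finset.erase_subset _ _))).trans
            (Int.le_self_sq _)
      _ ≤ (2 * s.card * B) ^ 2 := by linarith [sq_nonneg (s.card * B)]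
      _ ≤ |x i₀| ^ 2 := by gcongr
      _ = x i₀ ^ 2 := sq_abs _
  have hx : |x i₀| ≤ x i₀ ^ 2 := sq_abs (x i₀) ▸ Int.le_self_sq |x i₀|
  rw [resonance_eq_of_sign_neg_one h₀ hε]
  linarith [sq_nonneg (signedSum ε x s), le_abs_self (signedSum ε (x ^ 2) (s.erase i₀)),
    le_abs_self (signedSum ε x s ^ 2 + x i₀ ^ 2 - signedSum ε (x ^ 2) (s.erase i₀))]

lemma existsUnique_eq_signedSum (h₀ : i₀ ∈ s) (hε : ε i₀ = 1)
    (hr : signedSum ε x (s.erase i₀) = 0) (hx : ∀ i ∈ s.erase i₀, x i ≠ x i₀) :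
    ∃! i, i ∈ s ∧ ε i = 1 ∧ x i = signedSum ε x s := by
  have hk : signedSum ε x s = x i₀ := by
    rw [signedSum_eq_add_erase h₀, hε, hr, Units.val_one, one_mul, add_zero]
  rw [hk]
  exact ⟨i₀, ⟨h₀, hε, rfl⟩, fun i hi => by_contra fun hne =>
    hx i (Finset.mem_erase.2 ⟨hne, hi.1⟩) hi.2.2⟩

theorem existsUnique_eq_signedSum_or_abs_le_two_mul_abs_resonance (h₀ : i₀ ∈ s)
    (h₁ : i₁ ∈ s.erase i₀) (hx₁ : ∀ i ∈ s.erase i₀, |x i| ≤ |x i₁|)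
    (hm : ∀ i ∈ (s.erase i₀).erase i₁, |x i| ≤ m)
    (hx₁x₀ : 16 * s.card * |x i₁| < |x i₀|) (hmx₀ : 16 * (s.card : ℤ) ^ 2 * m ^ 2 ≤ |x i₀|) :
    (∃! i, i ∈ s ∧ ε i = 1 ∧ x i = signedSum ε x s) ∨ |x i₀| ≤ 2 * |resonance ε x s| := by
  have hcard : (1 : ℤ) ≤ s.card := by exact_mod_cast Finset.card_pos.2 ⟨i₀, h₀⟩
  rcases Int.units_eq_one_or (ε i₀) with hε | hε
  · by_cases hr : signedSum ε x (s.erase i₀) = 0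
    · left
      refine existsUnique_eq_signedSum h₀ hε hr fun i hi heq => ?_
      have hle : |x i₀| ≤ |x i₁| := heq ▸ hx₁ i hi
      nlinarith [abs_nonneg (x i₁)]
    · right
      have hrx : 16 * |signedSum ε x (s.erase i₀)| ≤ |x i₀| :=
        calc 16 * |signedSum ε x (s.erase i₀)|
            ≤ 16 * ((s.erase i₀).card * |x i₁|) := by gcongr; exact abs_signedSum_le hx₁
          _ ≤ 16 * (s.card * |x i₁|) := by gcongr; exact Finset.erase_subset _ _
          _ ≤ |x i₀| := by linarith
      linarith [abs_le_abs_resonance_of_sign_one h₀ hε h₁ hm hmx₀ hr hrx,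
        abs_nonneg (resonance ε x s)]
  · right
    refine abs_le_two_mul_abs_resonance_of_sign_neg_one h₀ hε (abs_nonneg _) hx₁ ?_
    nlinarith [abs_nonneg (x i₁)]

end SignedSum

lemma apply_le_apply_equiv_of_antitone {ι κ α : Type*} [LinearOrder κ] [Preorder α]
    {f : ι → α} {e : κ ≃ ι} (hf : Antitone fun l => f (e l)) {l : κ} {i : ι}
    (hi : ∀ j < l, i ≠ e j) : f i ≤ f (e l) := by
  have hl : l ≤ e.symm i := not_lt.1 fun hlt => hi _ hlt (e.apply_symm_apply i).symm
  simpa using hf hl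

theorem existsUnique_eq_signedSum_or_abs_le_two_mul_abs_resonance_of_antitone {ι : Type*}
    [Fintype ι] {p : ℕ} (hp : 3 ≤ p) {ε : ι → ℤˣ} {x : ι → ℤ} {e : Fin p ≃ ι}
    (hanti : Antitone fun l => |x (e l)|)
    (h₁₀ : 16 * p * |x (e ⟨1, by omega⟩)| < |x (e ⟨0, by omega⟩)|)
    (h₂₀ : 16 * (p : ℤ) ^ 2 * |x (e ⟨2, by omega⟩)| ^ 2 ≤ |x (e ⟨0, by omega⟩)|) :
    (∃! i, ε i = 1 ∧ x i = signedSum ε x Finset.univ) ∨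
      |x (e ⟨0, by omega⟩)| ≤ 2 * |resonance ε x Finset.univ| := by
  classical
  have hcard : (Finset.univ : Finset ι).card = p := by
    rw [Finset.card_univ, ← Fintype.card_congr e, Fintype.card_fin]
  have he : e ⟨1, by omega⟩ ≠ e ⟨0, by omega⟩ := e.injective.ne (by simp)
  have hrank {l : Fin p} {i : ι} (hi : ∀ j < l, i ≠ e j) : |x i| ≤ |x (e l)| :=
    apply_le_apply_equiv_of_antitone (f := fun i => |x i|) hanti hi
  have hx₁ : ∀ i ∈ Finset.univ.erase (e ⟨0, by omega⟩), |x i| ≤ |x (e ⟨1, by omega⟩)| :=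
    fun i hi => hrank fun j hj => by
      have hj₀ : j = ⟨0, by omega⟩ := by
        simp only [Fin.ext_iff, Fin.lt_def] at hj ⊢
        omega
      exact hj₀ ▸ Finset.ne_of_mem_erase hi
  have hx₂ : ∀ i ∈ (Finset.univ.erase (e ⟨0, by omega⟩)).erase (e ⟨1, by omega⟩),
      |x i| ≤ |x (e ⟨2, by omega⟩)| :=
    fun i hi => hrank fun j hj => by
      have hj₀₁ : j = ⟨0, by omega⟩ ∨ j = ⟨1, by omega⟩ := by
        simp only [Fin.ext_iff, Fin.lt_def] at hj ⊢
        omega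
      rcases hj₀₁ with hj₀ | hj₁
      · exact hj₀ ▸ Finset.ne_of_mem_erase (Finset.mem_of_mem_erase hi)
      · exact hj₁ ▸ Finset.ne_of_mem_erase hi
  simpa only [Finset.mem_univ, true_and] using
    existsUnique_eq_signedSum_or_abs_le_two_mul_abs_resonance (ε := ε) (Finset.mem_univ _)
      (Finset.mem_erase_of_ne_of_mem he (Finset.mem_univ _)) hx₁ hx₂ (by rwa [hcard])
      (by rwa [hcard])

theorem stmt1_general (ι : Type*) [Fintype ι] (p : ℕ) (hp : 3 ≤ p) :
    ∃ c : ℝ, 0 < c ∧ c < 1 ∧ ∃ C : ℝ, 1 ≤ C ∧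
      ∀ ε : ι → ℤˣ, ∀ κ : ι → ℤ, ∀ e : Fin p ≃ ι,
        (Antitone fun i => |κ (e i)|) →
        (∃! i, ε i = 1 ∧ κ i = signedSum ε κ Finset.univ)
          ∨ c * |(κ (e ⟨0, by omega⟩) : ℝ)| ≤ |(resonance ε κ Finset.univ : ℝ)|
          ∨ c * |(κ (e ⟨0, by omega⟩) : ℝ)| ≤ |(κ (e ⟨2, by omega⟩) : ℝ)| ^ 2
          ∨ |(κ (e ⟨0, by omega⟩) : ℝ)| ≤ C * |(κ (e ⟨1, by omega⟩) : ℝ)| := by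
  have hpR : (3 : ℝ) ≤ p := by exact_mod_cast hp
  have hc : 1 / (16 * (p : ℝ) ^ 2) ≤ 1 / 2 := by
    gcongr
    nlinarith
  refine ⟨1 / (16 * (p : ℝ) ^ 2), by positivity, by linarith, 16 * p, by linarith,
    fun ε κ e hanti => ?_⟩
  by_cases h₂₀ : 1 / (16 * (p : ℝ) ^ 2) * |(κ (e ⟨0, by omega⟩) : ℝ)| ≤
      |(κ (e ⟨2, by omega⟩) : ℝ)| ^ 2
  · exact .inr (.inr (.inl h₂₀))
  by_cases h₁₀ : |(κ (e ⟨0, by omega⟩) : ℝ)| ≤ 16 * p * |(κ (e ⟨1, by omega⟩) : ℝ)|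
  · exact .inr (.inr (.inr h₁₀))
  rw [not_le, one_div_mul_eq_div, lt_div_iff₀' (by positivity)] at h₂₀
  rw [not_le] at h₁₀
  rcases existsUnique_eq_signedSum_or_abs_le_two_mul_abs_resonance_of_antitone hp (ε := ε) hanti
    (by exact_mod_cast h₁₀) (by exact_mod_cast h₂₀.le) with hA | hΦ
  · exact .inl hA
  · have hΦR : |(κ (e ⟨0, by omega⟩) : ℝ)| ≤ 2 * |(resonance ε κ Finset.univ : ℝ)| := by
      exact_mod_cast hΦ
    refine .inr (.inl ((mul_le_mul_of_nonneg_right hc (abs_nonneg _)).trans ?_))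
    linarith

/-- Resonant decomposition lemma for the periodic p-NLS (Lemma `General NLS Decomp`):
for every frequency configuration, either exactly one odd-indexed internal frequency equals
the external frequency (Case A), or `|Φ| ≳ k₁*` (Case B), or `(k₃*)² ≳ k₁*` or `k₁* ∼ k₂*`
(Case C).  Here the decreasing rearrangement `k₁*, k₂*, k₃*` is expressed via an arbitrary
sorting permutation `e`.  Note that paper index `ℓ ∈ {1,…,p}` corresponds to `Fin p`
index `ℓ - 1`, so odd paper indices correspond to even `Fin p` indices. -/
theorem stmt1 (p : ℕ) (hp : Odd p) (hp5 : 5 ≤ p) :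
    ∃ c : ℝ, 0 < c ∧ c < 1 ∧ ∃ C : ℝ, 1 ≤ C ∧
      ∀ κ : Fin p → ℤ, ∀ e : Equiv.Perm (Fin p),
        (Antitone fun i => |κ (e i)|) →
        (((Finset.univ.filter fun i : Fin p =>
              Even (i:ℕ) ∧ κ i = ∑ j : Fin p, (-1:ℤ)^(j:ℕ) * κ j).card = 1)
          ∨ (c * (|κ (e ⟨0, by omega⟩)| : ℝ) ≤
              (|(∑ j : Fin p, (-1:ℤ)^(j:ℕ) * κ j)^2 - ∑ j : Fin p, (-1:ℤ)^(j:ℕ) * (κ j)^2| : ℝ))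
          ∨ ((c * (|κ (e ⟨0, by omega⟩)| : ℝ) ≤ ((|κ (e ⟨2, by omega⟩)| : ℝ))^2)
              ∨ ((|κ (e ⟨0, by omega⟩)| : ℝ) ≤ C * (|κ (e ⟨1, by omega⟩)| : ℝ)))) := by
  obtain ⟨c, hc₀, hc₁, C, hC, h⟩ := stmt1_general (Fin p) p (by omega)
  refine ⟨c, hc₀, hc₁, C, hC, fun κ e he => ?_⟩
  simpa [signedSum, resonance, Fintype.existsUnique_iff_card_one, Units.ext_iff,
    neg_one_pow_eq_one_iff_even] using h (fun i => (-1) ^ (i : ℕ)) κ e he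
end

section
/- For every odd integer p ≥ 5 there exist constants δ ∈ (0,1) and c > 0, depending only on p, with the following property. Let k₁, …, k_p be integers with k := k₁ − k₂ + ⋯ + k_p and Φ := k² − k₁² + k₂² − ⋯ − k_p². Suppose |k₁| ≥ |k_i| for all i (so k₁* = |k₁|), |k₂| ≥ |k_i| for all i ≠ 1 (so k₂* = |k₂|), and that |k₂| ≤ δ|k₁|, (k₃*)² ≤ δ|k₁|, and |k₁| ≤ k₂². Then |Φ| ≥ c · k₂². -/
open scoped BigOperators

/-!
Splitting `k₁` and `k₂` off the phase gives `Φ = 2 (k₁ - k₂) (r - k₂) + Φ'`, where `r` is the signed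
sum and `Φ'` the phase of the remaining frequencies. Both `r²` and `Φ'` are `O((k₃*)²)`, hence small
multiples of `|k₁|`. Since `|k₁| ≤ k₂²`, this makes `r` small against `k₂`, so that the product has
size comparable to `2 |k₁ k₂|`, which dominates `Φ'` and is at least `k₂²`.
-/

section Phase

variable {ι R : Type*} [CommRing R]

/-- The phase `Φ = (∑ ε l x l)² - ∑ ε l (x l)²` of the frequencies `x l`, `l ∈ s`, for arbitrary
coefficients `ε` in place of the alternating signs. Working over a finset lets one split off
frequencies. -/
def phase (s : Finset ι) (ε x : ι → R) : R :=
  (∑ l ∈ s, ε l * x l) ^ 2 - ∑ l ∈ s, ε l * x l ^ 2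

theorem phase_eq_two_mul_add_phase_sdiff_pair [DecidableEq ι] {s : Finset ι} {ε x : ι → R}
    {i j : ι} (hi : i ∈ s) (hj : j ∈ s) (hij : i ≠ j) (hεi : ε i = 1) (hεj : ε j = -1) :
    phase s ε x =
      2 * ((x i - x j) * (∑ l ∈ s \ {i, j}, ε l * x l - x j)) + phase (s \ {i, j}) ε x := by
  have hsub : {i, j} ⊆ s := Finset.insert_subset hi (Finset.singleton_subset_iff.2 hj)
  simp only [phase, ← Finset.sum_sdiff hsub, Finset.sum_pair hij, hεi, hεj]
  ring

variable [LinearOrder R] [IsStrictOrderedRing R]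

theorem abs_sum_mul_le_card_mul {s : Finset ι} {ε x : ι → R} {M : R}
    (hε : ∀ l ∈ s, |ε l| ≤ 1) (hx : ∀ l ∈ s, |x l| ≤ M) :
    |∑ l ∈ s, ε l * x l| ≤ s.card * M := by
  rw [← nsmul_eq_mul]
  refine (Finset.abs_sum_le_sum_abs _ _).trans (Finset.sum_le_card_nsmul _ _ _ fun l hl => ?_)
  rw [abs_mul]
  exact (mul_le_of_le_one_left (abs_nonneg _) (hε l hl)).trans (hx l hl)

theorem sum_mul_sq_le_card_mul_sq {s : Finset ι} {ε x : ι → R} {M : R}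
    (hε : ∀ l ∈ s, |ε l| ≤ 1) (hx : ∀ l ∈ s, |x l| ≤ M) :
    (∑ l ∈ s, ε l * x l) ^ 2 ≤ (s.card * M) ^ 2 :=
  sq_le_sq.2 ((abs_sum_mul_le_card_mul hε hx).trans (le_abs_self _))

theorem abs_phase_le {s : Finset ι} {ε x : ι → R} {M : R}
    (hε : ∀ l ∈ s, |ε l| ≤ 1) (hx : ∀ l ∈ s, |x l| ≤ M) :
    |phase s ε x| ≤ 2 * (s.card * M) ^ 2 := by
  have hsq : ∀ l ∈ s, |x l ^ 2| ≤ M ^ 2 := fun l hl => by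
    rw [abs_pow]
    exact pow_le_pow_left₀ (abs_nonneg _) (hx l hl) 2
  have hcard : (s.card : R) ≤ (s.card : R) ^ 2 := mod_cast Nat.le_self_pow two_ne_zero _
  calc |phase s ε x|
      ≤ |(∑ l ∈ s, ε l * x l) ^ 2| + |∑ l ∈ s, ε l * x l ^ 2| := abs_sub _ _
    _ ≤ (s.card * M) ^ 2 + s.card * M ^ 2 := by
        rw [abs_sq]
        exact add_le_add (sum_mul_sq_le_card_mul_sq hε hx) (abs_sum_mul_le_card_mul hε hsq)
    _ ≤ (s.card * M) ^ 2 + s.card ^ 2 * M ^ 2 := by gcongr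
    _ = 2 * (s.card * M) ^ 2 := by ring

theorem three_mul_abs_le_four_mul_abs_sub {a b : R} (h : 4 * |b| ≤ |a|) :
    3 * |a| ≤ 4 * |a - b| := by
  linarith [abs_sub_abs_le_abs_sub a b]

theorem abs_mul_le_abs_two_mul_sub_mul_sub_add {a b r e : R} (hb : 4 * |b| ≤ |a|)
    (hr : 4 * |r| ≤ |b|) (he : 8 * |e| ≤ |a * b|) :
    |a * b| ≤ |2 * ((a - b) * (r - b)) + e| := by
  have hprod : 9 * |a * b| ≤ 16 * |(a - b) * (r - b)| := by
    rw [abs_mul, abs_mul, abs_sub_comm r b]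
    calc 9 * (|a| * |b|) = (3 * |a|) * (3 * |b|) := by ring
      _ ≤ (4 * |a - b|) * (4 * |b - r|) :=
          mul_le_mul (three_mul_abs_le_four_mul_abs_sub hb) (three_mul_abs_le_four_mul_abs_sub hr)
            (by positivity) (by positivity)
      _ = 16 * (|a - b| * |b - r|) := by ring
  have htri := abs_sub_abs_le_abs_add (2 * ((a - b) * (r - b))) e
  rw [abs_mul, abs_two] at htri
  linarith

theorem abs_le_abs_mul_of_abs_le_sq {a b : R} (hb : 4 * |b| ≤ |a|) (ha : |a| ≤ b ^ 2) :
    |a| ≤ |a * b| := by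
  rcases eq_or_ne b 0 with rfl | hb0
  · simpa using ha
  have hb4 : 4 * |b| ≤ |b| * |b| := by
    rw [← sq, sq_abs]
    exact hb.trans ha
  have hb1 : 1 ≤ |b| := by linarith [le_of_mul_le_mul_right hb4 (abs_pos.2 hb0)]
  rw [abs_mul]
  exact le_mul_of_one_le_right (abs_nonneg a) hb1

theorem abs_mul_le_abs_phase [DecidableEq ι] {s : Finset ι} {ε x : ι → R} {i j : ι} {T : R}
    (hi : i ∈ s) (hj : j ∈ s) (hε : ∀ l ∈ s, |ε l| ≤ 1) (hεi : ε i = 1) (hεj : ε j = -1)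
    (hT : ∀ l ∈ s \ {i, j}, |x l| ≤ T) (hji : 4 * |x j| ≤ |x i|)
    (hTi : 16 * ((s \ {i, j}).card * T) ^ 2 ≤ |x i|) (hij : |x i| ≤ x j ^ 2) :
    |x i * x j| ≤ |phase s ε x| := by
  have hne : i ≠ j := by
    rintro rfl
    linarith
  have hε' : ∀ l ∈ s \ {i, j}, |ε l| ≤ 1 := fun l hl => hε l (Finset.sdiff_subset hl)
  rw [phase_eq_two_mul_add_phase_sdiff_pair hi hj hne hεi hεj]
  refine abs_mul_le_abs_two_mul_sub_mul_sub_add hji ?_ ?_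
  · have hsq : (4 * ∑ l ∈ s \ {i, j}, ε l * x l) ^ 2 ≤ x j ^ 2 := by
      linarith [sum_mul_sq_le_card_mul_sq hε' hT]
    simpa [abs_mul] using sq_le_sq.1 hsq
  · linarith [abs_phase_le hε' hT, abs_le_abs_mul_of_abs_le_sq hji hij]

end Phase

theorem stmt4_general {ι 𝕜 : Type*} [Field 𝕜] [LinearOrder 𝕜] [IsStrictOrderedRing 𝕜]
    (s : Finset ι) :
    ∃ δ : 𝕜, 0 < δ ∧ δ < 1 ∧ ∀ (ε x : ι → 𝕜) (T : 𝕜), ∀ i ∈ s, ∀ j ∈ s,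
      (∀ l ∈ s, |ε l| ≤ 1) → ε i = 1 → ε j = -1 →
      (∀ l ∈ s, l ≠ i → l ≠ j → |x l| ≤ T) →
      |x j| ≤ δ * |x i| → T ^ 2 ≤ δ * |x i| → |x i| ≤ x j ^ 2 →
      x j ^ 2 ≤ |phase s ε x| := by
  classical
  have hN : (1 : 𝕜) ≤ (s.card + 1) ^ 2 := one_le_pow₀ (by simp)
  refine ⟨(16 * (s.card + 1) ^ 2)⁻¹, by positivity, inv_lt_one_of_one_lt₀ (by linarith), ?_⟩
  intro ε x T i hi j hj hε hεi hεj hT hji hTi hij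
  rw [le_inv_mul_iff₀ (by positivity)] at hji hTi
  have hji' : 4 * |x j| ≤ |x i| := by
    refine le_trans ?_ hji
    gcongr
    linarith
  have hTi' : 16 * ((s \ {i, j}).card * T) ^ 2 ≤ |x i| := by
    have hcard : ((s \ {i, j}).card : 𝕜) ≤ s.card + 1 :=
      mod_cast (Finset.card_le_card Finset.sdiff_subset).trans (Nat.le_succ _)
    calc 16 * ((s \ {i, j}).card * T) ^ 2 = 16 * (s \ {i, j}).card ^ 2 * T ^ 2 := by ring
      _ ≤ 16 * (s.card + 1) ^ 2 * T ^ 2 := by gcongr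
      _ ≤ |x i| := hTi
  have hT' : ∀ l ∈ s \ {i, j}, |x l| ≤ T := fun l hl => by
    simp only [Finset.mem_sdiff, Finset.mem_insert, Finset.mem_singleton, not_or] at hl
    exact hT l hl.1 hl.2.1 hl.2.2
  calc x j ^ 2 = |x j| * |x j| := by rw [← sq, sq_abs]
    _ ≤ |x i| * |x j| :=
        mul_le_mul_of_nonneg_right (by linarith [abs_nonneg (x j)]) (abs_nonneg _)
    _ = |x i * x j| := (abs_mul _ _).symm
    _ ≤ |phase s ε x| := abs_mul_le_abs_phase hi hj hε hεi hεj hT' hji' hTi' hij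

/-- In the regime where `|k₁|` is dominant, `k₂* = |k₂| ≤ δ|k₁|`, `(k₃*)² ≤ δ|k₁|`, and
`|k₁| ≤ k₂²`, the phase satisfies `|Φ| ≥ c k₂²`.  Here `k₃*` is pinned down as the attained
maximum of `|κ i|` over `i ∉ {0, 1}` (`Fin p` indices `0, 1` correspond to paper `k₁, k₂`). -/
theorem stmt4 (p : ℕ) (hp : Odd p) (hp5 : 5 ≤ p) :
    ∃ δ : ℝ, 0 < δ ∧ δ < 1 ∧ ∃ c : ℝ, 0 < c ∧
      ∀ κ : Fin p → ℤ, ∀ k3 : ℤ,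
        (∀ i, |κ i| ≤ |κ ⟨0, by omega⟩|) →
        (∀ i, i ≠ (⟨0, by omega⟩ : Fin p) → |κ i| ≤ |κ ⟨1, by omega⟩|) →
        (∀ i, i ≠ (⟨0, by omega⟩ : Fin p) → i ≠ (⟨1, by omega⟩ : Fin p) → |κ i| ≤ k3) →
        (∃ i, i ≠ (⟨0, by omega⟩ : Fin p) ∧ i ≠ (⟨1, by omega⟩ : Fin p) ∧ |κ i| = k3) →
        ((|κ ⟨1, by omega⟩| : ℝ) ≤ δ * (|κ ⟨0, by omega⟩| : ℝ)) →
        ((k3:ℝ)^2 ≤ δ * (|κ ⟨0, by omega⟩| : ℝ)) →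
        (|κ ⟨0, by omega⟩| ≤ (κ ⟨1, by omega⟩)^2) →
        c * (κ ⟨1, by omega⟩ : ℝ)^2 ≤
          (|(∑ j : Fin p, (-1:ℤ)^(j:ℕ) * κ j)^2
            - ∑ j : Fin p, (-1:ℤ)^(j:ℕ) * (κ j)^2| : ℝ) := by
  obtain ⟨δ, hδ0, hδ1, h⟩ := stmt4_general (𝕜 := ℝ) (Finset.univ : Finset (Fin p))
  refine ⟨δ, hδ0, hδ1, 1, one_pos, fun κ k3 _ _ hT _ hji hTi hij => ?_⟩
  simpa [phase] using h (fun l => (-1) ^ (l : ℕ)) (fun l => κ l) k3 ⟨0, by omega⟩ (by simp)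
    ⟨1, by omega⟩ (by simp) (by simp) (by simp) (by simp) (fun l _ hi hj => mod_cast hT l hi hj)
    hji hTi (mod_cast hij)
end

section
/- Let p ≥ 5 be odd, s > (p−3)/(2(p−1)), and 0 < ε < min((p−1)s − (p−3)/2, 1). For k ∈ ℤ let S_k denote the set of tuples (k₁,…,k_p) ∈ ℤ^p with k = k₁ − k₂ + ⋯ + k_p, |k₁| ≥ 2p · max_{2≤i≤p}|k_i|, and |Φ| ≥ max(|k|,1), where Φ := k² − k₁² + k₂² − ⋯ − k_p². For a : ℤ → ℂ with ‖a‖_{h^s} < ∞, define (Ta)(k) := Σ_{(k₁,…,k_p)∈S_k} ( ∏_{i odd} a(k_i) · ∏_{i even} conj(a(k_i)) ) / Φ. Then this series converges absolutely for every k, and there is a constant C depending only on p, s, ε such that ‖Ta‖_{h^{s+ε}} ≤ C ‖a‖_{h^s}^p. -/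
open scoped BigOperators

/-- The alternating sum `k₁ − k₂ + k₃ − ⋯ + k_p` (Fin index `j` ↔ paper index `j+1`). -/
def altSum (p : ℕ) (κ : Fin p → ℤ) : ℤ := ∑ j : Fin p, (-1:ℤ)^(j:ℕ) * κ j

/-- The alternating sum of squares `k₁² − k₂² + ⋯ + k_p²`, so that
`Φ = k² − altSq` for `k = altSum`. -/
def altSq (p : ℕ) (κ : Fin p → ℤ) : ℤ := ∑ j : Fin p, (-1:ℤ)^(j:ℕ) * (κ j)^2

/-- The nonresonant region with one dominant odd-indexed frequency:
`k = k₁ − k₂ + ⋯ + k_p`, `|k₁| ≥ 2p·max_{2 ≤ i ≤ p}|k_i|` and `|Φ| ≥ max(|k|, 1)`. -/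
def NRSet (p : ℕ) (hp : 0 < p) (k : ℤ) : Set (Fin p → ℤ) :=
  {κ | altSum p κ = k ∧ (∀ i, i ≠ (⟨0, hp⟩ : Fin p) → 2 * (p:ℤ) * |κ i| ≤ |κ ⟨0, hp⟩|)
      ∧ max |k| 1 ≤ |k^2 - altSq p κ|}

/-- The alternating product `∏_{i odd} a(k_i) ∏_{i even} conj a(k_i)` (paper indexing). -/
noncomputable def nfProd (p : ℕ) (a : ℤ → ℂ) (κ : Fin p → ℤ) : ℂ :=
  ∏ i : Fin p, if Even (i:ℕ) then a (κ i) else (starRingEnd ℂ) (a (κ i))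

/-- A single term of the normal-form operator `T`: the alternating product divided by `Φ`. -/
noncomputable def nfTerm (p : ℕ) (a : ℤ → ℂ) (k : ℤ) (κ : Fin p → ℤ) : ℂ :=
  nfProd p a κ / ((k^2 - altSq p κ : ℤ) : ℂ)

/-!
On the non-resonant region `Φ ^ 2 ≳ ⟨k⟩ ^ 2` and `⟨k⟩ ∼ ⟨k₁⟩`, so dividing by `Φ` gains one
derivative over the dominant factor. Of this derivative `ε` is kept, and the remaining `1 - ε` is
shared equally among the `p - 1` small frequencies, which is possible because `|kᵢ| ≤ |k|`. Each
small factor is then measured with the weight `⟨kᵢ⟩ ^ {2 (s + (1 - ε) / (p - 1))}`, whose inverse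
is summable over `ℤ` exactly when `ε < (p - 1) s - (p - 3) / 2`. Cauchy–Schwarz for fixed `k`,
where the small frequencies determine `k₁`, followed by summation in `k`, gives the bound.
-/

open scoped ENNReal

section ENNRealSums

lemma mul_sq_tsum_le_tsum_mul_tsum {ι : Type*} {c : ℝ≥0∞} {t u v : ι → ℝ≥0∞}
    (h : ∀ i, c * t i ^ 2 ≤ u i * v i) :
    c * (∑' i, t i) ^ 2 ≤ (∑' i, u i) * ∑' i, v i := by
  have sqrt_sq (x : ℝ≥0∞) : (x ^ (1 / 2 : ℝ)) ^ 2 = x := by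
    rw [← ENNReal.rpow_mul_natCast]; norm_num
  have sqrt_le (i : ι) : c ^ (1 / 2 : ℝ) * t i ≤ u i ^ (1 / 2 : ℝ) * v i ^ (1 / 2 : ℝ) := by
    refine (ENNReal.pow_le_pow_left_iff two_ne_zero).1 ?_
    simpa only [mul_pow, sqrt_sq] using h i
  have holder : ∑' i, u i ^ (1 / 2 : ℝ) * v i ^ (1 / 2 : ℝ)
      ≤ (∑' i, u i) ^ (1 / 2 : ℝ) * (∑' i, v i) ^ (1 / 2 : ℝ) := by
    refine ENNReal.summable.tsum_le_of_sum_le fun F ↦ ?_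
    refine (ENNReal.inner_le_Lp_mul_Lq F _ _ Real.HolderConjugate.two_two).trans ?_
    simp only [ENNReal.rpow_ofNat, sqrt_sq]
    gcongr <;> exact ENNReal.sum_le_tsum F
  calc c * (∑' i, t i) ^ 2 = (∑' i, c ^ (1 / 2 : ℝ) * t i) ^ 2 := by
        rw [ENNReal.tsum_mul_left, mul_pow, sqrt_sq]
    _ ≤ ((∑' i, u i) ^ (1 / 2 : ℝ) * (∑' i, v i) ^ (1 / 2 : ℝ)) ^ 2 := by
        gcongr
        exact (ENNReal.tsum_le_tsum sqrt_le).trans holder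
    _ = (∑' i, u i) * ∑' i, v i := by rw [mul_pow, sqrt_sq, sqrt_sq]

lemma tsum_pi_prod_eq_prod_tsum {n : ℕ} {α : Fin n → Type*} (f : ∀ i, α i → ℝ≥0∞) :
    ∑' x : ∀ i, α i, ∏ i, f i (x i) = ∏ i, ∑' j, f i j := by
  induction n with
  | zero => simp [tsum_fintype]
  | succ n ih =>
    rw [← (Fin.consEquiv α).tsum_eq, ENNReal.tsum_prod']
    simp only [Fin.consEquiv, Equiv.coe_fn_mk, Fin.prod_univ_succ, Fin.cons_zero, Fin.cons_succ,
      ENNReal.tsum_mul_left, ENNReal.tsum_mul_right, ih fun i ↦ f i.succ]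

lemma tsum_tsum_subtype_le_of_subset_fiber {α β : Type*} {g : α → β} {S : β → Set α}
    (hS : ∀ b, ∀ x ∈ S b, g x = b) (f : α → ℝ≥0∞) :
    ∑' b, ∑' x : S b, f x ≤ ∑' x, f x :=
  calc ∑' b, ∑' x : S b, f x ≤ ∑' b, ∑' x : g ⁻¹' {b}, f x :=
        ENNReal.tsum_le_tsum fun b ↦ ENNReal.tsum_mono_subtype f (hS b)
    _ = ∑' x, f x := ENNReal.tsum_fiberwise f g

end ENNRealSums

/-- The weight `⟨k⟩ ^ {2σ}` of the squared `h^σ` norm. -/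
noncomputable def sobolevWeight (σ : ℝ) (k : ℤ) : ℝ := (1 + (k : ℝ) ^ 2) ^ σ

section SobolevWeight

variable {σ : ℝ} {j k : ℤ}

lemma sobolevWeight_pos (σ : ℝ) (k : ℤ) : 0 < sobolevWeight σ k := by
  unfold sobolevWeight; positivity

lemma sobolevWeight_add (σ τ : ℝ) (k : ℤ) :
    sobolevWeight (σ + τ) k = sobolevWeight σ k * sobolevWeight τ k :=
  Real.rpow_add (by positivity) σ τ

lemma sobolevWeight_mul_natCast (σ : ℝ) (n : ℕ) (k : ℤ) :
    sobolevWeight (σ * n) k = sobolevWeight σ k ^ n :=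
  Real.rpow_mul_natCast (by positivity) σ n

lemma sobolevWeight_le_of_abs_le (hσ : σ ≤ 0) (h : |j| ≤ |k|) :
    sobolevWeight σ k ≤ sobolevWeight σ j := by
  have hsq : (j : ℝ) ^ 2 ≤ (k : ℝ) ^ 2 := by exact_mod_cast sq_le_sq.2 h
  exact Real.rpow_le_rpow_of_nonpos (by positivity) (by linarith) hσ

lemma sobolevWeight_mul_natCast_le_prod {n : ℕ} {x : Fin n → ℤ} (hσ : σ ≤ 0)
    (h : ∀ i, |x i| ≤ |k|) : sobolevWeight (σ * n) k ≤ ∏ i, sobolevWeight σ (x i) :=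
  calc sobolevWeight (σ * n) k = ∏ _i : Fin n, sobolevWeight σ k := by
        rw [sobolevWeight_mul_natCast, Fin.prod_const]
    _ ≤ ∏ i, sobolevWeight σ (x i) :=
        Finset.prod_le_prod (fun _ _ ↦ (sobolevWeight_pos σ k).le)
          fun i _ ↦ sobolevWeight_le_of_abs_le hσ (h i)

lemma one_add_sq_le_four_mul_of_abs_le_two_mul (h : |j| ≤ 2 * |k|) :
    1 + (j : ℝ) ^ 2 ≤ 4 * (1 + (k : ℝ) ^ 2) := by
  have hsq : j ^ 2 ≤ (2 * k) ^ 2 := sq_le_sq.2 (by rwa [abs_mul, abs_two])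
  have hsq' : (j : ℝ) ^ 2 ≤ (2 * k) ^ 2 := by exact_mod_cast hsq
  linarith

lemma sobolevWeight_le_of_abs_le_two_mul (σ : ℝ) (hjk : |j| ≤ 2 * |k|) (hkj : |k| ≤ 2 * |j|) :
    sobolevWeight σ j ≤ 4 ^ |σ| * sobolevWeight σ k := by
  unfold sobolevWeight
  rcases le_total 0 σ with hσ | hσ
  · rw [abs_of_nonneg hσ, ← Real.mul_rpow (by norm_num) (by positivity)]
    exact Real.rpow_le_rpow (by positivity) (one_add_sq_le_four_mul_of_abs_le_two_mul hjk) hσ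
  · rw [abs_of_nonpos hσ, Real.rpow_neg (by norm_num), ← Real.inv_rpow (by norm_num),
      ← Real.mul_rpow (by norm_num) (by positivity)]
    refine Real.rpow_le_rpow_of_nonpos (by positivity) ?_ hσ
    linarith [one_add_sq_le_four_mul_of_abs_le_two_mul hkj]

lemma summable_sobolevWeight (hσ : σ < -(1 / 2)) : Summable (sobolevWeight σ) := by
  have hsum : Summable fun k : ℤ ↦ |(k : ℝ)| ^ (2 * σ) := by
    simpa using Real.summable_abs_int_rpow (b := -(2 * σ)) (by linarith)
  refine hsum.of_norm_bounded_eventually ?_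
  filter_upwards [(Set.finite_singleton (0 : ℤ)).compl_mem_cofinite] with k hk
  have hk0 : 0 < |(k : ℝ)| := abs_pos.2 (Int.cast_ne_zero.2 hk)
  rw [Real.norm_of_nonneg (sobolevWeight_pos σ k).le, Real.rpow_mul hk0.le, Real.rpow_two]
  exact Real.rpow_le_rpow_of_nonpos (pow_pos hk0 2) (by rw [sq_abs]; linarith) (by linarith)

end SobolevWeight

/-- The squared `h^σ` norm of a sequence on `ℤ`, as an extended nonnegative real: it is `∞` exactly
when the sequence is not in `h^σ`. The target is a general `ENorm` so that sums of absolute values,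
which live in `ℝ≥0∞`, can be measured before they are known to be finite. -/
noncomputable def sobolevNormSq {E : Type*} [ENorm E] (σ : ℝ) (f : ℤ → E) : ℝ≥0∞ :=
  ∑' k, ENNReal.ofReal (sobolevWeight σ k) * ‖f k‖ₑ ^ 2

section SobolevNormSq

variable {E F : Type*} {σ : ℝ}

lemma sobolevNormSq_mono [ENorm E] [ENorm F] {f : ℤ → E} {g : ℤ → F}
    (h : ∀ k, ‖f k‖ₑ ≤ ‖g k‖ₑ) : sobolevNormSq σ f ≤ sobolevNormSq σ g :=
  ENNReal.tsum_le_tsum fun k ↦ by gcongr; exact h k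

lemma enorm_ne_top_of_sobolevNormSq_ne_top [ENorm E] {f : ℤ → E} (hf : sobolevNormSq σ f ≠ ∞)
    (k : ℤ) : ‖f k‖ₑ ≠ ∞ := by
  intro htop
  refine ENNReal.ne_top_of_tsum_ne_top hf k ?_
  rw [htop, ENNReal.top_pow two_ne_zero,
    ENNReal.mul_top (ENNReal.ofReal_pos.2 (sobolevWeight_pos σ k)).ne']

variable [SeminormedAddCommGroup E]

lemma sobolevNormSq_eq_tsum_ofReal (σ : ℝ) (f : ℤ → E) :
    sobolevNormSq σ f = ∑' k, ENNReal.ofReal (sobolevWeight σ k * ‖f k‖ ^ 2) :=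
  tsum_congr fun k ↦ by
    rw [ENNReal.ofReal_mul (sobolevWeight_pos σ k).le, ENNReal.ofReal_pow (norm_nonneg _),
      ofReal_norm]

lemma summable_iff_sobolevNormSq_ne_top {f : ℤ → E} :
    Summable (fun k ↦ sobolevWeight σ k * ‖f k‖ ^ 2) ↔ sobolevNormSq σ f ≠ ∞ := by
  have hnonneg (k : ℤ) : 0 ≤ sobolevWeight σ k * ‖f k‖ ^ 2 :=
    mul_nonneg (sobolevWeight_pos σ k).le (sq_nonneg _)
  rw [sobolevNormSq_eq_tsum_ofReal]
  refine ⟨Summable.tsum_ofReal_ne_top, fun h ↦ ?_⟩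
  simpa only [ENNReal.toReal_ofReal (hnonneg _)] using ENNReal.summable_toReal h

lemma tsum_eq_toReal_sobolevNormSq (σ : ℝ) (f : ℤ → E) :
    ∑' k, sobolevWeight σ k * ‖f k‖ ^ 2 = (sobolevNormSq σ f).toReal := by
  rw [sobolevNormSq_eq_tsum_ofReal, ENNReal.tsum_toReal_eq fun _ ↦ ENNReal.ofReal_ne_top]
  exact tsum_congr fun k ↦
    (ENNReal.toReal_ofReal (mul_nonneg (sobolevWeight_pos σ k).le (sq_nonneg _))).symm

end SobolevNormSq

section AlternatingSum

lemma altSum_succ {n : ℕ} (κ : Fin (n + 1) → ℤ) :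
    altSum (n + 1) κ = κ 0 - altSum n (Fin.tail κ) := by
  simp [altSum, Fin.sum_univ_succ, Fin.tail, pow_succ, sub_eq_add_neg]

lemma abs_altSum_le (p : ℕ) (κ : Fin p → ℤ) : |altSum p κ| ≤ ∑ i, |κ i| :=
  (Finset.abs_sum_le_sum_abs _ _).trans_eq (Finset.sum_congr rfl fun i _ ↦ by simp [abs_mul])

end AlternatingSum

namespace NRSet

variable {n : ℕ} {k : ℤ} {κ : Fin (n + 1) → ℤ}

lemma two_mul_abs_tail_le_abs_head (h : κ ∈ NRSet (n + 1) n.succ_pos k) (i : Fin n) :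
    2 * (n + 1) * |Fin.tail κ i| ≤ |κ 0| := by
  exact_mod_cast h.2.1 i.succ (Fin.succ_ne_zero i)

lemma two_mul_abs_head_sub_le (h : κ ∈ NRSet (n + 1) n.succ_pos k) : 2 * |κ 0 - k| ≤ |κ 0| := by
  have hsub : κ 0 - k = altSum n (Fin.tail κ) := by rw [← h.1, altSum_succ, sub_sub_cancel]
  have hsum : (n + 1) * (2 * |κ 0 - k|) ≤ (n + 1) * |κ 0| :=
    calc (n + 1) * (2 * |κ 0 - k|) ≤ (n + 1) * (2 * ∑ i, |Fin.tail κ i|) := by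
          rw [hsub]; gcongr; exact abs_altSum_le n _
      _ = ∑ i, 2 * (n + 1) * |Fin.tail κ i| := by rw [← Finset.mul_sum]; ring
      _ ≤ ∑ _i : Fin n, |κ 0| := Finset.sum_le_sum fun i _ ↦ two_mul_abs_tail_le_abs_head h i
      _ ≤ (n + 1) * |κ 0| := by
          rw [Fin.sum_const, nsmul_eq_mul]; gcongr; exact le_add_of_nonneg_right zero_le_one
  exact le_of_mul_le_mul_left hsum (by positivity)

lemma abs_le_two_mul_abs_head (h : κ ∈ NRSet (n + 1) n.succ_pos k) : |k| ≤ 2 * |κ 0| := by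
  linarith [two_mul_abs_head_sub_le h, abs_sub_comm k (κ 0), abs_sub_abs_le_abs_sub k (κ 0),
    abs_nonneg (κ 0)]

lemma abs_head_le_two_mul_abs (h : κ ∈ NRSet (n + 1) n.succ_pos k) : |κ 0| ≤ 2 * |k| := by
  linarith [two_mul_abs_head_sub_le h, abs_sub_abs_le_abs_sub (κ 0) k]

lemma abs_tail_le_abs (h : κ ∈ NRSet (n + 1) n.succ_pos k) (i : Fin n) :
    |Fin.tail κ i| ≤ |k| := by
  have htail : 2 * |Fin.tail κ i| ≤ |κ 0| :=
    calc 2 * |Fin.tail κ i| ≤ 2 * (n + 1) * |Fin.tail κ i| := by gcongr; lia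
      _ ≤ |κ 0| := two_mul_abs_tail_le_abs_head h i
  linarith [abs_head_le_two_mul_abs h]

lemma injOn_tail (n : ℕ) (k : ℤ) :
    Set.InjOn Fin.tail (NRSet (n + 1) n.succ_pos k) := by
  intro κ hκ κ' hκ' htail
  have hhead : κ 0 = κ' 0 := by
    have hsum := hκ.1.trans hκ'.1.symm
    rwa [altSum_succ, altSum_succ, htail, sub_left_inj] at hsum
  rw [← Fin.cons_self_tail κ, ← Fin.cons_self_tail κ', hhead, htail]

lemma one_add_sq_le_two_mul_phase_sq {p : ℕ} {hp : 0 < p} {κ : Fin p → ℤ}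
    (h : κ ∈ NRSet p hp k) : 1 + (k : ℝ) ^ 2 ≤ 2 * ((k ^ 2 - altSq p κ : ℤ) : ℝ) ^ 2 := by
  have hk : k ^ 2 ≤ (k ^ 2 - altSq p κ) ^ 2 := sq_le_sq.2 ((le_max_left _ _).trans h.2.2)
  have h1 : 1 ^ 2 ≤ (k ^ 2 - altSq p κ) ^ 2 :=
    sq_le_sq.2 (by simpa using (le_max_right _ _).trans h.2.2)
  exact_mod_cast (by linarith : 1 + k ^ 2 ≤ 2 * (k ^ 2 - altSq p κ) ^ 2)

end NRSet

section NormalForm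

lemma norm_nfProd (p : ℕ) (a : ℤ → ℂ) (κ : Fin p → ℤ) : ‖nfProd p a κ‖ = ∏ i, ‖a (κ i)‖ := by
  rw [nfProd, norm_prod]
  exact Finset.prod_congr rfl fun i _ ↦ by split_ifs <;> simp

lemma sq_norm_nfTerm_le {p : ℕ} {hp : 0 < p} {k : ℤ} {κ : Fin p → ℤ} (h : κ ∈ NRSet p hp k)
    (a : ℤ → ℂ) : ‖nfTerm p a k κ‖ ^ 2 ≤ 2 * sobolevWeight (-1) k * ∏ i, ‖a (κ i)‖ ^ 2 := by
  have hphase := NRSet.one_add_sq_le_two_mul_phase_sq h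
  have hphase_pos : 0 < ((k ^ 2 - altSq p κ : ℤ) : ℝ) ^ 2 := by linarith [sq_nonneg (k : ℝ)]
  have hinv : (((k ^ 2 - altSq p κ : ℤ) : ℝ) ^ 2)⁻¹ ≤ 2 * sobolevWeight (-1) k := by
    rw [sobolevWeight, Real.rpow_neg_one, ← div_eq_mul_inv, inv_le_comm₀ hphase_pos (by positivity),
      inv_div]
    linarith
  calc ‖nfTerm p a k κ‖ ^ 2
      = (((k ^ 2 - altSq p κ : ℤ) : ℝ) ^ 2)⁻¹ * ∏ i, ‖a (κ i)‖ ^ 2 := by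
        rw [nfTerm, norm_div, norm_nfProd, div_pow, Complex.norm_intCast, sq_abs,
          Finset.prod_pow, div_eq_inv_mul]
    _ ≤ 2 * sobolevWeight (-1) k * ∏ i, ‖a (κ i)‖ ^ 2 := by gcongr

variable {n : ℕ} {s θ : ℝ}

lemma sobolevWeight_le_head_mul_prod_tail {k : ℤ} {κ : Fin (n + 1) → ℤ}
    (h : κ ∈ NRSet (n + 1) n.succ_pos k) (s : ℝ) (hθ : 0 ≤ θ) :
    sobolevWeight (s - θ * n) k ≤
      4 ^ |s| * (∏ i, sobolevWeight s (κ i)) * ∏ i, sobolevWeight (-(s + θ)) (Fin.tail κ i) :=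
  calc sobolevWeight (s - θ * n) k = sobolevWeight s k * sobolevWeight (-θ * n) k := by
        rw [← sobolevWeight_add]; ring_nf
    _ ≤ 4 ^ |s| * sobolevWeight s (κ 0) * ∏ i, sobolevWeight (-θ) (Fin.tail κ i) :=
        mul_le_mul
          (sobolevWeight_le_of_abs_le_two_mul s (NRSet.abs_le_two_mul_abs_head h)
            (NRSet.abs_head_le_two_mul_abs h))
          (sobolevWeight_mul_natCast_le_prod (neg_nonpos.2 hθ) (NRSet.abs_tail_le_abs h))
          (sobolevWeight_pos _ _).le
          (mul_nonneg (by positivity) (sobolevWeight_pos _ _).le)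
    _ = 4 ^ |s| * (∏ i, sobolevWeight s (κ i)) *
          ∏ i, sobolevWeight (-(s + θ)) (Fin.tail κ i) := by
        have hsplit (i : Fin n) : sobolevWeight (-θ) (Fin.tail κ i) =
            sobolevWeight s (κ i.succ) * sobolevWeight (-(s + θ)) (Fin.tail κ i) := by
          rw [Fin.tail, ← sobolevWeight_add]; ring_nf
        simp only [hsplit, Finset.prod_mul_distrib, Fin.prod_univ_succ]
        ring

lemma sobolevWeight_mul_sq_norm_nfTerm_le {k : ℤ} {κ : Fin (n + 1) → ℤ}
    (h : κ ∈ NRSet (n + 1) n.succ_pos k) (s : ℝ) (hθ : 0 ≤ θ) (a : ℤ → ℂ) :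
    sobolevWeight (s + 1 - θ * n) k * ‖nfTerm (n + 1) a k κ‖ ^ 2 ≤
      2 * 4 ^ |s| * (∏ i, sobolevWeight s (κ i) * ‖a (κ i)‖ ^ 2) *
        ∏ i, sobolevWeight (-(s + θ)) (Fin.tail κ i) := by
  have hpos := (sobolevWeight_pos (s + 1 - θ * n) k).le
  calc sobolevWeight (s + 1 - θ * n) k * ‖nfTerm (n + 1) a k κ‖ ^ 2
      ≤ sobolevWeight (s + 1 - θ * n) k * (2 * sobolevWeight (-1) k * ∏ i, ‖a (κ i)‖ ^ 2) := by
        gcongr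
        exact sq_norm_nfTerm_le h a
    _ = 2 * sobolevWeight (s - θ * n) k * ∏ i, ‖a (κ i)‖ ^ 2 := by
        rw [show s - θ * n = s + 1 - θ * n + -1 by ring, sobolevWeight_add]
        ring
    _ ≤ 2 * (4 ^ |s| * (∏ i, sobolevWeight s (κ i)) *
          ∏ i, sobolevWeight (-(s + θ)) (Fin.tail κ i)) * ∏ i, ‖a (κ i)‖ ^ 2 := by
        gcongr
        exact sobolevWeight_le_head_mul_prod_tail h s hθ
    _ = _ := by rw [Finset.prod_mul_distrib]; ring

lemma ofReal_sobolevWeight_mul_sq_tsum_enorm_nfTerm_le (hθ : 0 ≤ θ) (a : ℤ → ℂ) (k : ℤ) :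
    ENNReal.ofReal (sobolevWeight (s + 1 - θ * n) k) *
        (∑' κ : NRSet (n + 1) n.succ_pos k, ‖nfTerm (n + 1) a k κ‖ₑ) ^ 2 ≤
      (∑' κ : NRSet (n + 1) n.succ_pos k, ENNReal.ofReal (2 * 4 ^ |s|) *
          ∏ i, ENNReal.ofReal (sobolevWeight s (κ.1 i) * ‖a (κ.1 i)‖ ^ 2)) *
        (∑' j, ENNReal.ofReal (sobolevWeight (-(s + θ)) j)) ^ n := by
  have hpos (σ : ℝ) (j : ℤ) := (sobolevWeight_pos σ j).le
  have htail : ∑' κ : NRSet (n + 1) n.succ_pos k,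
        ∏ i, ENNReal.ofReal (sobolevWeight (-(s + θ)) (Fin.tail κ.1 i)) ≤
      (∑' j, ENNReal.ofReal (sobolevWeight (-(s + θ)) j)) ^ n := by
    rw [← Fin.prod_const, ← tsum_pi_prod_eq_prod_tsum]
    exact ENNReal.tsum_comp_le_tsum_of_injective (NRSet.injOn_tail n k).injective
      fun x : Fin n → ℤ ↦ ∏ i, ENNReal.ofReal (sobolevWeight (-(s + θ)) (x i))
  refine (mul_sq_tsum_le_tsum_mul_tsum fun κ ↦ ?_).trans (mul_le_mul_right htail _)
  have hterm := ENNReal.ofReal_le_ofReal (sobolevWeight_mul_sq_norm_nfTerm_le κ.2 s hθ a)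
  rwa [ENNReal.ofReal_mul (hpos _ _), ENNReal.ofReal_pow (norm_nonneg _), ofReal_norm,
    ENNReal.ofReal_mul (mul_nonneg (by positivity)
      (Finset.prod_nonneg fun _ _ ↦ mul_nonneg (hpos _ _) (sq_nonneg _))),
    ENNReal.ofReal_mul (by positivity),
    ENNReal.ofReal_prod_of_nonneg fun _ _ ↦ mul_nonneg (hpos _ _) (sq_nonneg _),
    ENNReal.ofReal_prod_of_nonneg fun _ _ ↦ hpos _ _] at hterm

lemma sobolevNormSq_tsum_enorm_nfTerm_le (hθ : 0 ≤ θ) (a : ℤ → ℂ) :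
    sobolevNormSq (s + 1 - θ * n)
        (fun k ↦ ∑' κ : NRSet (n + 1) n.succ_pos k, ‖nfTerm (n + 1) a k κ‖ₑ) ≤
      ENNReal.ofReal (2 * 4 ^ |s|) * (∑' j, ENNReal.ofReal (sobolevWeight (-(s + θ)) j)) ^ n *
        sobolevNormSq s a ^ (n + 1) := by
  set b : ℤ → ℝ≥0∞ := fun j ↦ ENNReal.ofReal (sobolevWeight s j * ‖a j‖ ^ 2)
  set A : ℝ≥0∞ := ∑' j, ENNReal.ofReal (sobolevWeight (-(s + θ)) j)
  calc sobolevNormSq (s + 1 - θ * n)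
        (fun k ↦ ∑' κ : NRSet (n + 1) n.succ_pos k, ‖nfTerm (n + 1) a k κ‖ₑ)
      ≤ ∑' k, (∑' κ : NRSet (n + 1) n.succ_pos k,
          ENNReal.ofReal (2 * 4 ^ |s|) * ∏ i, b (κ.1 i)) * A ^ n :=
        ENNReal.tsum_le_tsum fun k ↦ ofReal_sobolevWeight_mul_sq_tsum_enorm_nfTerm_le hθ a k
    _ = ENNReal.ofReal (2 * 4 ^ |s|) * A ^ n *
          ∑' k, ∑' κ : NRSet (n + 1) n.succ_pos k, ∏ i, b (κ.1 i) := by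
        simp only [ENNReal.tsum_mul_left, ENNReal.tsum_mul_right]
        ring
    _ ≤ ENNReal.ofReal (2 * 4 ^ |s|) * A ^ n * ∑' κ : Fin (n + 1) → ℤ, ∏ i, b (κ i) := by
        gcongr
        exact tsum_tsum_subtype_le_of_subset_fiber (fun _ _ h ↦ h.1)
          fun κ : Fin (n + 1) → ℤ ↦ ∏ i, b (κ i)
    _ = ENNReal.ofReal (2 * 4 ^ |s|) * A ^ n * sobolevNormSq s a ^ (n + 1) := by
        rw [tsum_pi_prod_eq_prod_tsum, Fin.prod_const, sobolevNormSq_eq_tsum_ofReal]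

lemma exists_sobolevNormSq_tsum_enorm_nfTerm_le {p : ℕ} (hp : 2 ≤ p) {ε : ℝ} (hε1 : ε ≤ 1)
    (hε : ε < (p - 1) * s - (p - 3) / 2) :
    ∃ C : ℝ≥0∞, C ≠ ∞ ∧ ∀ a : ℤ → ℂ,
      sobolevNormSq (s + ε)
          (fun k ↦ ∑' κ : NRSet p (by omega) k, ‖nfTerm p a k κ‖ₑ) ≤
        C * sobolevNormSq s a ^ p := by
  obtain ⟨n, rfl⟩ : ∃ n, p = n + 1 := ⟨p - 1, by omega⟩
  have hn : (0 : ℝ) < n := by exact_mod_cast (by omega : 0 < n)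
  have hshare : (1 - ε) / n * n = 1 - ε := div_mul_cancel₀ _ hn.ne'
  have hexp : -(s + (1 - ε) / n) < -(1 / 2) := by
    have hshare_gt : 1 / 2 - s < (1 - ε) / n := by
      push_cast at hε
      rw [lt_div_iff₀ hn]
      linarith
    linarith
  have hA := (summable_sobolevWeight hexp).tsum_ofReal_ne_top
  refine ⟨ENNReal.ofReal (2 * 4 ^ |s|) * _ ^ n,
    ENNReal.mul_ne_top ENNReal.ofReal_ne_top (ENNReal.pow_ne_top hA), fun a ↦ ?_⟩
  have hmain := sobolevNormSq_tsum_enorm_nfTerm_le (n := n) (s := s)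
    (div_nonneg (sub_nonneg.2 hε1) hn.le) a
  rwa [hshare, add_sub_assoc, sub_sub_cancel] at hmain

end NormalForm

theorem stmt5_general (p : ℕ) (hp : 2 ≤ p) (s ε : ℝ) (hε1 : ε ≤ 1)
    (hε : ε < ((p : ℝ) - 1) * s - ((p : ℝ) - 3) / 2) :
    ∃ C : ℝ, 0 < C ∧ ∀ a : ℤ → ℂ,
      Summable (fun k : ℤ ↦ (1 + (k : ℝ) ^ 2) ^ s * ‖a k‖ ^ 2) →
      (∀ k : ℤ, Summable (fun κ : NRSet p (by omega) k ↦ ‖nfTerm p a k κ.1‖)) ∧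
      Summable (fun k : ℤ ↦ (1 + (k : ℝ) ^ 2) ^ (s + ε) *
        ‖∑' κ : NRSet p (by omega) k, nfTerm p a k κ.1‖ ^ 2) ∧
      √(∑' k : ℤ, (1 + (k : ℝ) ^ 2) ^ (s + ε) *
          ‖∑' κ : NRSet p (by omega) k, nfTerm p a k κ.1‖ ^ 2) ≤
        C * √(∑' k : ℤ, (1 + (k : ℝ) ^ 2) ^ s * ‖a k‖ ^ 2) ^ p := by
  obtain ⟨C, hC, hbound⟩ := exists_sobolevNormSq_tsum_enorm_nfTerm_le hp hε1 hε
  refine ⟨√C.toReal + 1, by positivity, fun a ha ↦ ?_⟩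
  change Summable (fun k ↦ sobolevWeight s k * ‖a k‖ ^ 2) at ha
  have hfin : C * sobolevNormSq s a ^ p ≠ ∞ :=
    ENNReal.mul_ne_top hC (ENNReal.pow_ne_top (summable_iff_sobolevNormSq_ne_top.1 ha))
  have hTa : sobolevNormSq (s + ε) (fun k ↦ ∑' κ : NRSet p (by omega) k, nfTerm p a k κ) ≤
      C * sobolevNormSq s a ^ p :=
    (sobolevNormSq_mono fun _ ↦ enorm_tsum_le_tsum_enorm).trans (hbound a)
  refine ⟨fun k ↦ ?_, summable_iff_sobolevNormSq_ne_top.2 (ne_top_of_le_ne_top hfin hTa), ?_⟩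
  · simpa using ENNReal.summable_toReal
      (enorm_ne_top_of_sobolevNormSq_ne_top (ne_top_of_le_ne_top hfin (hbound a)) k)
  · set N := (sobolevNormSq s a).toReal
    calc √(∑' k, sobolevWeight (s + ε) k * ‖∑' κ : NRSet p (by omega) k, nfTerm p a k κ‖ ^ 2)
        ≤ √(C.toReal * N ^ p) := by
          rw [tsum_eq_toReal_sobolevNormSq]
          gcongr
          simpa [N] using ENNReal.toReal_mono hfin hTa
      _ = √C.toReal * √N ^ p := by
          rw [Real.sqrt_mul ENNReal.toReal_nonneg, Real.sqrt_eq_rpow N,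
            Real.rpow_pow_comm ENNReal.toReal_nonneg, ← Real.sqrt_eq_rpow]
      _ ≤ (√C.toReal + 1) * √N ^ p := by gcongr; exact le_add_of_nonneg_right zero_le_one
      _ = (√C.toReal + 1) * √(∑' k, sobolevWeight s k * ‖a k‖ ^ 2) ^ p := by
          rw [tsum_eq_toReal_sobolevNormSq]

/-- Smoothing bound for the normal-form transformation `T` (Lemma `Normal Form Regularity`):
`T` maps `h^s` into `h^{s+ε}` with bound `‖Ta‖_{h^{s+ε}} ≤ C ‖a‖_{h^s}^p`, and the defining
series converges absolutely. -/
theorem stmt5 (p : ℕ) (hp : Odd p) (hp5 : 5 ≤ p) (s ε : ℝ)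
    (hs : s > ((p:ℝ) - 3) / (2 * ((p:ℝ) - 1)))
    (hε0 : 0 < ε)
    (hε : ε < min (((p:ℝ) - 1) * s - ((p:ℝ) - 3) / 2) 1) :
    ∃ C : ℝ, 0 < C ∧ ∀ a : ℤ → ℂ,
      Summable (fun k : ℤ => (1 + (k:ℝ)^2) ^ s * ‖a k‖^2) →
      ((∀ k : ℤ, Summable (fun κ : NRSet p (by omega) k => ‖nfTerm p a k κ.1‖))
        ∧ Real.sqrt (∑' k : ℤ, (1 + (k:ℝ)^2) ^ (s + ε) *
              ‖∑' κ : NRSet p (by omega) k, nfTerm p a k κ.1‖^2)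
            ≤ C * (Real.sqrt (∑' k : ℤ, (1 + (k:ℝ)^2) ^ s * ‖a k‖^2)) ^ p) := by
  obtain ⟨C, hC, hbound⟩ := stmt5_general p (by omega) s ε (hε.trans_le (min_le_right _ _)).le
    (hε.trans_le (min_le_left _ _))
  exact ⟨C, hC, fun a ha ↦ ⟨(hbound a ha).1, (hbound a ha).2.2⟩⟩
end

section
/- Let p ≥ 5 be odd, s > (p−3)/(2(p−1)), and 0 < ε < min((p−1)s − (p−3)/2, 1). Then there exist θ > 0 and C > 0, depending only on p, s, ε, such that for every k ∈ ℤ: Σ ⟨k⟩^{2s+2ε−2+θ} / ∏_{i=1}^p ⟨k_i⟩^{2s} ≤ C, where the sum runs over all tuples (k₁,…,k_p) ∈ ℤ^p with k = k₁ − k₂ + ⋯ + k_p and |k_i| ≤ |k|/(2p) for every index i ≠ 2. -/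
/-!
The constraint writes `-k₂` as `k` minus a sum of the other frequencies that is at most `|k| / 2`
in absolute value. Hence `⟨k₂⟩ ≈ ⟨k⟩`, so that `⟨k₂⟩^{-2s} ≲ ⟨k⟩^{-2s}` whatever the sign of `s`,
and `k₂` is determined by the `p - 1` other frequencies, over which the sum is then free. Each of
these has size at most `|k|`, so for `b ≥ 0` we may trade `⟨kᵢ⟩^{-2s} ≤ ⟨k⟩^{2b} ⟨kᵢ⟩^{-2(s+b)}`,
and the sum over `kᵢ` converges once `s + b > 1/2`. The total power of `⟨k⟩` is
`2ε - 2 + θ + 2(p - 1)b`, which vanishes for some `θ > 0` exactly when `(p - 1)b < 1 - ε`. The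
upper bound on `ε` says that `max (0, 1/2 - s) < (1 - ε) / (p - 1)`, which leaves room for such
a `b`.
-/

open scoped BigOperators

/-- The high–low region where the unique large frequency is the even-indexed `k₂`
(`Fin p` index `1`): all other internal frequencies satisfy `|k_i| ≤ |k|/(2p)`. -/
def HLSet (p : ℕ) (hp : 1 < p) (k : ℤ) : Set (Fin p → ℤ) :=
  {κ | altSum p κ = k ∧ ∀ i, i ≠ (⟨1, hp⟩ : Fin p) → 2 * (p:ℤ) * |κ i| ≤ |k|}

open Finset Real

theorem summable_prod_apply {ι : Type*} [Fintype ι] {α : ι → Type*} {f : ∀ i, α i → ℝ}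
    (hf₀ : ∀ i x, 0 ≤ f i x) (hf : ∀ i, Summable (f i)) :
    Summable fun x : ∀ i, α i ↦ ∏ i, f i (x i) := by
  classical
  refine summable_of_sum_le (c := ∏ i, ∑' x, f i x) (fun x ↦ prod_nonneg fun i _ ↦ hf₀ i (x i))
    fun u ↦ ?_
  let t (i : ι) : Finset (α i) := u.image fun x ↦ x i
  have hut : u ⊆ Fintype.piFinset t := fun x hx ↦
    Fintype.mem_piFinset.2 fun i ↦ mem_image_of_mem (fun y : ∀ i, α i ↦ y i) hx
  calc ∑ x ∈ u, ∏ i, f i (x i)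
      ≤ ∑ x ∈ Fintype.piFinset t, ∏ i, f i (x i) :=
        sum_le_sum_of_subset_of_nonneg hut fun x _ _ ↦ prod_nonneg fun i _ ↦ hf₀ i (x i)
    _ = ∏ i, ∑ x ∈ t i, f i x := (prod_univ_sum t f).symm
    _ ≤ ∏ i, ∑' x, f i x := prod_le_prod (fun i _ ↦ sum_nonneg fun x _ ↦ hf₀ i x)
        fun i _ ↦ (hf i).sum_le_tsum _ fun x _ ↦ hf₀ i x

theorem summable_one_add_int_sq_rpow_neg {r : ℝ} (hr : 1 / 2 < r) :
    Summable fun n : ℤ ↦ (1 + (n : ℝ) ^ 2) ^ (-r) := by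
  refine .of_norm_bounded_eventually (summable_abs_int_rpow (b := 2 * r) (by linarith)) ?_
  filter_upwards [(Set.finite_singleton (0 : ℤ)).compl_mem_cofinite] with n hn
  have hn₀ : (n : ℝ) ≠ 0 := Int.cast_ne_zero.2 hn
  have habs : |(n : ℝ)| ^ (-(2 * r)) = ((n : ℝ) ^ 2) ^ (-r) := by
    rw [← sq_abs, ← rpow_natCast_mul (abs_nonneg _), Nat.cast_ofNat, mul_neg]
  rw [norm_of_nonneg (by positivity), habs]
  exact rpow_le_rpow_of_nonpos (by positivity) (by linarith) (by linarith)

theorem rpow_le_rpow_abs_mul_rpow {x y c : ℝ} (hx : 0 < x) (hy : 0 < y) (hxy : x ≤ c * y)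
    (hyx : y ≤ c * x) (s : ℝ) : x ^ s ≤ c ^ |s| * y ^ s := by
  have hc : 0 < c := pos_of_mul_pos_left (hx.trans_le hxy) hy.le
  rcases le_total 0 s with hs | hs
  · rw [abs_of_nonneg hs, ← mul_rpow hc.le hy.le]
    exact rpow_le_rpow hx.le hxy hs
  · have hdiv : c⁻¹ * y ≤ x := (inv_mul_le_iff₀ hc).2 hyx
    rw [abs_of_nonpos hs, rpow_neg_eq_inv_rpow, ← mul_rpow (by positivity) hy.le]
    exact rpow_le_rpow_of_nonpos (by positivity) hdiv hs

theorem prod_rpow_le_pow_card_mul_prod_rpow_sub {ι : Type*} {t : Finset ι} {w : ι → ℝ} {K b : ℝ}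
    (hb : 0 ≤ b) (hw : ∀ i ∈ t, 0 < w i) (hwK : ∀ i ∈ t, w i ≤ K) (r : ℝ) :
    ∏ i ∈ t, w i ^ r ≤ (K ^ b) ^ #t * ∏ i ∈ t, w i ^ (r - b) := by
  rw [← prod_const, ← prod_mul_distrib]
  refine prod_le_prod (fun i hi ↦ (rpow_pos_of_pos (hw i hi) r).le) fun i hi ↦ ?_
  calc w i ^ r = w i ^ b * w i ^ (r - b) := by rw [← rpow_add (hw i hi), add_sub_cancel]
    _ ≤ K ^ b * w i ^ (r - b) := by
      gcongr
      exacts [(rpow_pos_of_pos (hw i hi) _).le, (hw i hi).le, hwK i hi]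

theorem altSum_eq_add_sum_subtype_ne {p : ℕ} (κ : Fin p → ℤ) (a : Fin p) :
    altSum p κ = (-1) ^ (a : ℕ) * κ a + ∑ j : {j // j ≠ a}, (-1) ^ (j : ℕ) * κ j :=
  Fintype.sum_eq_add_sum_subtype_ne (fun j : Fin p ↦ (-1) ^ (j : ℕ) * κ j) a

theorem eq_of_altSum_eq {p : ℕ} {κ μ : Fin p → ℤ} (a : Fin p) (hsum : altSum p κ = altSum p μ)
    (hne : ∀ i ≠ a, κ i = μ i) : κ = μ := by
  have hrest : ∑ j : {j // j ≠ a}, (-1) ^ (j : ℕ) * κ j =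
      ∑ j : {j // j ≠ a}, (-1) ^ (j : ℕ) * μ j :=
    sum_congr rfl fun j _ ↦ by rw [hne j j.2]
  rw [altSum_eq_add_sum_subtype_ne κ a, altSum_eq_add_sum_subtype_ne μ a, hrest,
    add_left_inj, mul_right_inj' (pow_ne_zero _ (by norm_num))] at hsum
  funext i
  by_cases hi : i = a
  exacts [hi ▸ hsum, hne i hi]

theorem abs_altSum_sub_le {p : ℕ} (κ : Fin p → ℤ) (a : Fin p) :
    |altSum p κ - (-1) ^ (a : ℕ) * κ a| ≤ ∑ j : {j // j ≠ a}, |κ j| := by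
  rw [altSum_eq_add_sum_subtype_ne κ a, add_sub_cancel_left]
  refine (abs_sum_le_sum_abs _ _).trans_eq (sum_congr rfl fun j _ ↦ ?_)
  rw [abs_mul, abs_neg_one_pow, one_mul]

namespace HLSet

variable {p : ℕ} {hp : 1 < p} {k : ℤ} {κ : Fin p → ℤ}

theorem injective_restrict :
    Function.Injective fun (κ : HLSet p hp k) (i : {i // i ≠ (⟨1, hp⟩ : Fin p)}) ↦ κ.1 i :=
  fun κ μ h ↦ Subtype.ext <|
    eq_of_altSum_eq ⟨1, hp⟩ (κ.2.1.trans μ.2.1.symm) fun i hi ↦ congrFun h ⟨i, hi⟩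

theorem abs_apply_le (hκ : κ ∈ HLSet p hp k) {i : Fin p} (hi : i ≠ ⟨1, hp⟩) : |κ i| ≤ |k| := by
  have hp' : (1 : ℤ) < p := mod_cast hp
  nlinarith only [hp', hκ.2 i hi, abs_nonneg (κ i)]

theorem two_mul_abs_add_le (hκ : κ ∈ HLSet p hp k) : 2 * |k + κ ⟨1, hp⟩| ≤ |k| := by
  have hp₀ : (0 : ℤ) < p := mod_cast zero_lt_one.trans hp
  have hrest : |k + κ ⟨1, hp⟩| ≤ ∑ j : {j // j ≠ (⟨1, hp⟩ : Fin p)}, |κ j| := by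
    simpa only [hκ.1, pow_one, neg_one_mul, sub_neg_eq_add] using abs_altSum_sub_le κ ⟨1, hp⟩
  have hcard : (Fintype.card {j // j ≠ (⟨1, hp⟩ : Fin p)} : ℤ) ≤ p := by
    exact_mod_cast (Fintype.card_subtype_le _).trans_eq (Fintype.card_fin p)
  refine le_of_mul_le_mul_left ?_ hp₀
  calc (p : ℤ) * (2 * |k + κ ⟨1, hp⟩|)
      ≤ p * (2 * ∑ j : {j // j ≠ (⟨1, hp⟩ : Fin p)}, |κ j|) := by gcongr
    _ = ∑ j : {j // j ≠ (⟨1, hp⟩ : Fin p)}, 2 * (p : ℤ) * |κ j| := by rw [← mul_sum]; ring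
    _ ≤ ∑ _j : {j // j ≠ (⟨1, hp⟩ : Fin p)}, |k| := sum_le_sum fun j _ ↦ hκ.2 j j.2
    _ = Fintype.card {j // j ≠ (⟨1, hp⟩ : Fin p)} * |k| := by
      rw [sum_const, card_univ, nsmul_eq_mul]
    _ ≤ p * |k| := by gcongr

theorem large_rpow_le (hκ : κ ∈ HLSet p hp k) (s : ℝ) :
    (1 + (κ ⟨1, hp⟩ : ℝ) ^ 2) ^ s ≤ 4 ^ |s| * (1 + (k : ℝ) ^ 2) ^ s := by
  have hdist : 2 * |(k : ℝ) + κ ⟨1, hp⟩| ≤ |(k : ℝ)| := mod_cast two_mul_abs_add_le hκ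
  have hle : |(κ ⟨1, hp⟩ : ℝ)| ≤ |2 * (k : ℝ)| := by grind
  have hge : |(k : ℝ)| ≤ |2 * (κ ⟨1, hp⟩ : ℝ)| := by grind
  apply rpow_le_rpow_abs_mul_rpow (by positivity) (by positivity)
  · linarith [sq_le_sq.2 hle]
  · linarith [sq_le_sq.2 hge]

theorem prod_small_rpow_neg_le (hκ : κ ∈ HLSet p hp k) {b : ℝ} (hb : 0 ≤ b) (s : ℝ) :
    ∏ i : {i // i ≠ (⟨1, hp⟩ : Fin p)}, (1 + (κ i : ℝ) ^ 2) ^ (-s) ≤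
      (1 + (k : ℝ) ^ 2) ^ (((p : ℝ) - 1) * b) *
        ∏ i : {i // i ≠ (⟨1, hp⟩ : Fin p)}, (1 + (κ i : ℝ) ^ 2) ^ (-(s + b)) := by
  have hcard : #(univ : Finset {i // i ≠ (⟨1, hp⟩ : Fin p)}) = p - 1 := by
    rw [card_univ, Fintype.card_subtype_compl, Fintype.card_fin, Fintype.card_subtype_eq]
  have hpow : (1 + (k : ℝ) ^ 2) ^ (((p : ℝ) - 1) * b) = ((1 + (k : ℝ) ^ 2) ^ b) ^ (p - 1) := by
    rw [← rpow_mul_natCast (by positivity), Nat.cast_pred (zero_lt_one.trans hp), mul_comm]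
  rw [hpow, ← hcard, neg_add']
  refine prod_rpow_le_pow_card_mul_prod_rpow_sub hb (fun i _ ↦ by positivity) (fun i _ ↦ ?_) _
  have hle : |(κ i : ℝ)| ≤ |(k : ℝ)| := mod_cast abs_apply_le hκ i.2
  linarith [sq_le_sq.2 hle]

theorem rpow_div_prod_rpow_le (hκ : κ ∈ HLSet p hp k) {b : ℝ} (hb : 0 ≤ b) (s : ℝ) :
    (1 + (k : ℝ) ^ 2) ^ (s - ((p : ℝ) - 1) * b) / ∏ i, (1 + (κ i : ℝ) ^ 2) ^ s ≤
      4 ^ |s| * ∏ i : {i // i ≠ (⟨1, hp⟩ : Fin p)}, (1 + (κ i : ℝ) ^ 2) ^ (-(s + b)) := by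
  set K : ℝ := 1 + (k : ℝ) ^ 2
  set P : ℝ := ∏ i : {i // i ≠ (⟨1, hp⟩ : Fin p)}, (1 + (κ i : ℝ) ^ 2) ^ (-(s + b))
  have hK : 0 < K := by positivity
  have hlarge : (1 + (κ ⟨1, hp⟩ : ℝ) ^ 2) ^ (-s) ≤ 4 ^ |s| * K ^ (-s) :=
    abs_neg s ▸ large_rpow_le hκ (-s)
  have hinv : (∏ i, (1 + (κ i : ℝ) ^ 2) ^ s)⁻¹ = (1 + (κ ⟨1, hp⟩ : ℝ) ^ 2) ^ (-s) *
      ∏ i : {i // i ≠ (⟨1, hp⟩ : Fin p)}, (1 + (κ i : ℝ) ^ 2) ^ (-s) := by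
    rw [← Fintype.prod_eq_mul_prod_subtype_ne (fun i ↦ (1 + (κ i : ℝ) ^ 2) ^ (-s)),
      ← prod_inv_distrib]
    exact prod_congr rfl fun i _ ↦ (rpow_neg (by positivity) s).symm
  have hcancel : K ^ (s - ((p : ℝ) - 1) * b) * K ^ (-s) * K ^ (((p : ℝ) - 1) * b) = 1 := by
    rw [← rpow_add hK, ← rpow_add hK, ← rpow_zero K]
    ring_nf
  calc K ^ (s - ((p : ℝ) - 1) * b) / ∏ i, (1 + (κ i : ℝ) ^ 2) ^ s
      ≤ K ^ (s - ((p : ℝ) - 1) * b) *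
          ((4 ^ |s| * K ^ (-s)) * (K ^ (((p : ℝ) - 1) * b) * P)) := by
        rw [div_eq_mul_inv, hinv]
        gcongr
        exact prod_small_rpow_neg_le hκ hb s
    _ = K ^ (s - ((p : ℝ) - 1) * b) * K ^ (-s) * K ^ (((p : ℝ) - 1) * b) * (4 ^ |s| * P) := by
        ring
    _ = 4 ^ |s| * P := by rw [hcancel, one_mul]

theorem exists_tsum_rpow_div_prod_rpow_le (hp : 1 < p) {s b : ℝ} (hb : 0 ≤ b)
    (hsb : 1 / 2 < s + b) :
    ∃ C : ℝ, 0 < C ∧ ∀ k : ℤ,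
      Summable (fun κ : HLSet p hp k ↦
        (1 + (k : ℝ) ^ 2) ^ (s - ((p : ℝ) - 1) * b) / ∏ i, (1 + (κ.1 i : ℝ) ^ 2) ^ s) ∧
      ∑' κ : HLSet p hp k,
        (1 + (k : ℝ) ^ 2) ^ (s - ((p : ℝ) - 1) * b) / ∏ i, (1 + (κ.1 i : ℝ) ^ 2) ^ s ≤ C := by
  let F (x : {i // i ≠ (⟨1, hp⟩ : Fin p)} → ℤ) : ℝ :=
    4 ^ |s| * ∏ i, (1 + (x i : ℝ) ^ 2) ^ (-(s + b))
  have hF₀ : ∀ x, 0 ≤ F x := fun x ↦ by positivity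
  have hF : Summable F :=
    (summable_prod_apply (fun _ _ ↦ by positivity)
      fun _ ↦ summable_one_add_int_sq_rpow_neg hsb).mul_left _
  refine ⟨∑' x, F x + 1, add_pos_of_nonneg_of_pos (tsum_nonneg hF₀) one_pos, fun k ↦ ?_⟩
  have hle (κ : HLSet p hp k) := rpow_div_prod_rpow_le κ.2 hb s
  have hsum := (hF.comp_injective injective_restrict).of_nonneg_of_le
    (fun κ : HLSet p hp k ↦ by positivity) hle
  exact ⟨hsum, (hsum.tsum_le_tsum_of_inj _ injective_restrict (fun x _ ↦ hF₀ x) hle hF).trans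
    (le_add_of_nonneg_right zero_le_one)⟩

end HLSet

theorem stmt7_general (p : ℕ) (hp : 1 < p) (s ε : ℝ)
    (hε : ε < min (((p : ℝ) - 1) * s - ((p : ℝ) - 3) / 2) 1) :
    ∃ θ : ℝ, 0 < θ ∧ ∃ C : ℝ, 0 < C ∧ ∀ k : ℤ,
      Summable (fun κ : HLSet p hp k ↦
        (1 + (k : ℝ) ^ 2) ^ ((2 * s + 2 * ε - 2 + θ) / 2) / ∏ i, (1 + (κ.1 i : ℝ) ^ 2) ^ s) ∧
      ∑' κ : HLSet p hp k,
        (1 + (k : ℝ) ^ 2) ^ ((2 * s + 2 * ε - 2 + θ) / 2) /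
          ∏ i, (1 + (κ.1 i : ℝ) ^ 2) ^ s ≤ C := by
  obtain ⟨hεs, hε1⟩ := lt_min_iff.1 hε
  have hp' : (0 : ℝ) < p - 1 := sub_pos.2 (mod_cast hp)
  have hroom : max 0 (1 / 2 - s) < (1 - ε) / (p - 1) :=
    max_lt (div_pos (by linarith) hp') ((lt_div_iff₀ hp').2 (by linarith))
  obtain ⟨b, hb, hbε⟩ := exists_between hroom
  obtain ⟨hb₀, hsb⟩ := max_lt_iff.1 hb
  have hθ : 0 < 2 * (1 - ε - (p - 1) * b) := by linarith [(lt_div_iff₀' hp').1 hbε]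
  have hexp : (2 * s + 2 * ε - 2 + 2 * (1 - ε - (p - 1) * b)) / 2 = s - (p - 1) * b := by ring
  refine ⟨2 * (1 - ε - (p - 1) * b), hθ, ?_⟩
  rw [hexp]
  exact HLSet.exists_tsum_rpow_div_prod_rpow_le hp hb₀.le (by linarith)

/-- The frequency-space sum arising in the high–low interaction case where the unique large
frequency is `k₂`: `Σ ⟨k⟩^{2s+2ε−2+θ} / ∏ ⟨k_i⟩^{2s}` is bounded uniformly in `k`, for
some `θ > 0` depending only on `p, s, ε`.  (Recall `⟨k⟩^{2σ} = (1+k²)^σ`.) -/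
theorem stmt7 (p : ℕ) (hp : Odd p) (hp5 : 5 ≤ p) (s ε : ℝ)
    (hs : s > ((p:ℝ) - 3) / (2 * ((p:ℝ) - 1)))
    (hε0 : 0 < ε)
    (hε : ε < min (((p:ℝ) - 1) * s - ((p:ℝ) - 3) / 2) 1) :
    ∃ θ : ℝ, 0 < θ ∧ ∃ C : ℝ, 0 < C ∧ ∀ k : ℤ,
      Summable (fun κ : HLSet p (by omega) k =>
        (1 + (k:ℝ)^2) ^ ((2*s + 2*ε - 2 + θ) / 2) /
          ∏ i : Fin p, (1 + ((κ.1 i : ℝ))^2) ^ s)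
      ∧ (∑' κ : HLSet p (by omega) k,
          (1 + (k:ℝ)^2) ^ ((2*s + 2*ε - 2 + θ) / 2) /
            ∏ i : Fin p, (1 + ((κ.1 i : ℝ))^2) ^ s) ≤ C :=
  stmt7_general p (by omega) s ε hε
end

section
/- Let p > 1 be odd, γ > 0, let f : ℝ → ℂ be continuous and 2π-periodic, and let u = u(t,x) be a smooth function defined for all t ≥ 0, 2π-periodic in x, satisfying i∂ₜu + ∂ₓ²u − |u|^{p−1}u + iγu = f(x) pointwise. Then limsup_{t→∞} ∫₀^{2π} |u(t,x)|² dx ≤ γ^{−2} ∫₀^{2π} |f(x)|² dx. In particular the limsup of the L²(𝕋) norm of u(t,·) is bounded by a constant depending only on γ and the L²(𝕋) norm of f. -/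
open scoped BigOperators

/-!
Testing the equation against `u` kills the potential term, because `⟪z, I * z⟫ = 0` in the real
inner product of `ℂ`, and the dispersive term, because `⟪u, I * u_xx⟫` is the `x`-derivative of the
periodic function `⟪u, I * u_x⟫`. Young's inequality applied to the forcing term then gives
`M' ≤ -γ * M + γ⁻¹ * ∫ ‖f‖ ^ 2` for the mass `M`, and Grönwall's bound for this differential
inequality converges to `γ⁻² * ∫ ‖f‖ ^ 2`.
-/

open MeasureTheory Filter Topology Complex

lemma le_gronwallBound_of_hasDerivAt {y y' : ℝ → ℝ} {K ε a t : ℝ}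
    (hy : ∀ s, a ≤ s → HasDerivAt y (y' s) s) (hbound : ∀ s, a ≤ s → y' s ≤ K * y s + ε)
    (hat : a ≤ t) : y t ≤ gronwallBound (y a) K ε (t - a) :=
  le_gronwallBound_of_liminf_deriv_right_le
    (fun s hs => (hy s hs.1).continuousAt.continuousWithinAt)
    (fun s hs _ hr => (hy s hs.1).hasDerivWithinAt.liminf_right_slope_le hr)
    le_rfl (fun s hs => hbound s hs.1) t ⟨hat, le_rfl⟩

lemma tendsto_gronwallBound_atTop_of_neg {K : ℝ} (hK : K < 0) (δ ε : ℝ) :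
    Tendsto (gronwallBound δ K ε) atTop (𝓝 (-(ε / K))) := by
  have hexp : Tendsto (fun t => Real.exp (K * t)) atTop (𝓝 0) :=
    Real.tendsto_exp_atBot.comp (tendsto_id.const_mul_atTop_of_neg hK)
  rw [gronwallBound_of_K_ne_0 hK.ne]
  simpa using (hexp.const_mul δ).add ((hexp.sub_const 1).const_mul (ε / K))

lemma limsup_le_of_hasDerivAt_of_le_neg_mul_add {y y' : ℝ → ℝ} {γ ε a : ℝ} (hγ : 0 < γ)
    (hy : ∀ t, a ≤ t → HasDerivAt y (y' t) t) (hbound : ∀ t, a ≤ t → y' t ≤ -γ * y t + ε)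
    (hcobdd : IsCoboundedUnder (· ≤ ·) atTop y) : limsup y atTop ≤ ε / γ := by
  have hlim : Tendsto (fun t => gronwallBound (y a) (-γ) ε (t - a)) atTop (𝓝 (ε / γ)) := by
    simpa only [div_neg, neg_neg, Function.comp_def, id, sub_eq_add_neg] using
      (tendsto_gronwallBound_atTop_of_neg (neg_neg_of_pos hγ) (y a) ε).comp
        (tendsto_atTop_add_const_right atTop (-a) tendsto_id)
  have hle : ∀ᶠ t in atTop, y t ≤ gronwallBound (y a) (-γ) ε (t - a) :=
    (eventually_ge_atTop a).mono fun t ht => le_gronwallBound_of_hasDerivAt hy hbound ht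
  exact (limsup_le_limsup hle hcobdd hlim.isBoundedUnder_le).trans_eq hlim.limsup_eq

lemma hasDerivAt_intervalIntegral_of_continuous_deriv {E : Type*} [NormedAddCommGroup E]
    [NormedSpace ℝ E] {μ : Measure ℝ} [IsLocallyFiniteMeasure μ] {F F' : ℝ → ℝ → E}
    (hF : ∀ t, Continuous (F t)) (hF' : Continuous (Function.uncurry F'))
    (hderiv : ∀ t x, HasDerivAt (fun s => F s x) (F' t x) t) (a b t : ℝ) :
    HasDerivAt (fun s => ∫ x in a..b, F s x ∂μ) (∫ x in a..b, F' t x ∂μ) t := by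
  obtain ⟨C, hC⟩ := ((isCompact_Icc (a := t - 1) (b := t + 1)).prod
    (isCompact_uIcc (a := a) (b := b))).exists_bound_of_continuousOn hF'.continuousOn
  exact (intervalIntegral.hasDerivAt_integral_of_dominated_loc_of_deriv_le
    (bound := fun _ => C) (Icc_mem_nhds (sub_one_lt t) (lt_add_one t))
    (.of_forall fun s => (hF s).aestronglyMeasurable)
    ((hF t).intervalIntegrable a b)
    (hF'.uncurry_left t).aestronglyMeasurable
    (.of_forall fun x hx s hs => hC (s, x) ⟨hs, Set.uIoc_subset_uIcc hx⟩)
    intervalIntegrable_const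
    (.of_forall fun x _ s _ => hderiv s x)).2

section PartialDerivative

variable {𝕜 E F : Type*} [NontriviallyNormedField 𝕜] [NormedAddCommGroup E] [NormedSpace 𝕜 E]
  [NormedAddCommGroup F] [NormedSpace 𝕜 F] {u : 𝕜 → F → E}

lemma hasDerivAt_left_of_differentiableAt_uncurry {t : 𝕜} {x : F}
    (hu : DifferentiableAt 𝕜 (Function.uncurry u) (t, x)) :
    HasDerivAt (fun s => u s x) (fderiv 𝕜 (Function.uncurry u) (t, x) (1, 0)) t :=
  hu.hasFDerivAt.comp_hasDerivAt (f := fun s => (s, x)) t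
    ((hasDerivAt_id t).prodMk (hasDerivAt_const t x))

lemma continuous_uncurry_deriv_left (hu : ContDiff 𝕜 1 (Function.uncurry u)) :
    Continuous (Function.uncurry fun t x => deriv (fun s => u s x) t) := by
  have hfderiv : (Function.uncurry fun t x => deriv (fun s => u s x) t) =
      fun q => fderiv 𝕜 (Function.uncurry u) q (1, 0) :=
    funext fun q => (hasDerivAt_left_of_differentiableAt_uncurry
      (hu.differentiable one_ne_zero q)).deriv
  rw [hfderiv]
  exact (hu.continuous_fderiv one_ne_zero).clm_apply continuous_const

end PartialDerivative

lemma periodic_deriv {𝕜 E : Type*} [NontriviallyNormedField 𝕜] [NormedAddCommGroup E]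
    [NormedSpace 𝕜 E] {v : 𝕜 → E} {L : 𝕜} (hv : Function.Periodic v L) :
    Function.Periodic (deriv v) L := fun x => by
  rw [← deriv_comp_add_const, funext hv]

lemma two_mul_real_inner_le_mul_sq_add_inv_mul_sq {E : Type*} [NormedAddCommGroup E]
    [InnerProductSpace ℝ E] {ε : ℝ} (hε : 0 < ε) (x y : E) :
    2 * inner ℝ x y ≤ ε * ‖x‖ ^ 2 + ε⁻¹ * ‖y‖ ^ 2 :=
  calc 2 * inner ℝ x y
    _ ≤ 2 * ‖x‖ * ‖y‖ := by linarith [real_inner_le_norm x y]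
    _ ≤ ε * ‖x‖ ^ 2 + ε⁻¹ * ‖y‖ ^ 2 := two_mul_le_add_mul_sq hε

lemma real_inner_I_mul_self (z : ℂ) : inner ℝ z (I * z) = 0 :=
  real_inner_I_smul_self ℂ z

lemma integral_inner_I_mul_deriv_deriv_eq_zero {v : ℝ → ℂ} {L : ℝ} (hv : ContDiff ℝ 2 v)
    (hper : Function.Periodic v L) :
    ∫ x in (0 : ℝ)..L, inner ℝ (v x) (I * deriv (deriv v) x) = 0 := by
  have hv' : ContDiff ℝ 1 (deriv v) := hv.deriv'
  have hflux (x : ℝ) : HasDerivAt (fun x => inner ℝ (v x) (I * deriv v x))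
      (inner ℝ (v x) (I * deriv (deriv v) x)) x := by
    have hprod := (hv.differentiable two_ne_zero x).hasDerivAt.inner ℝ
      ((hv'.differentiable one_ne_zero x).hasDerivAt.const_mul I)
    rwa [real_inner_I_mul_self, add_zero] at hprod
  have hcont : Continuous fun x => inner ℝ (v x) (I * deriv (deriv v) x) :=
    hv.continuous.inner (continuous_const.mul (hv'.continuous_deriv le_rfl))
  rw [intervalIntegral.integral_eq_sub_of_hasDerivAt (fun x _ => hflux x)
    (hcont.intervalIntegrable 0 L), hper.eq, (periodic_deriv hper).eq, sub_self]

section Mass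

variable {E : Type*} [NormedAddCommGroup E]

/-- The mass of `v` over one period `[0, L]`, that is, its squared `L²` norm on the circle of
length `L`. -/
noncomputable def mass (L : ℝ) (v : ℝ → E) : ℝ := ∫ x in (0 : ℝ)..L, ‖v x‖ ^ 2

lemma mass_nonneg {L : ℝ} (hL : 0 ≤ L) (v : ℝ → E) : 0 ≤ mass L v :=
  intervalIntegral.integral_nonneg hL fun _ _ => sq_nonneg _

lemma hasDerivAt_mass [InnerProductSpace ℝ E] {u : ℝ → ℝ → E}
    (hu : ContDiff ℝ 1 (Function.uncurry u)) (L t : ℝ) :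
    HasDerivAt (fun s => mass L (u s))
      (∫ x in (0 : ℝ)..L, 2 * inner ℝ (u t x) (deriv (fun s => u s x) t)) t := by
  refine hasDerivAt_intervalIntegral_of_continuous_deriv
    (F' := fun t x => 2 * inner ℝ (u t x) (deriv (fun s => u s x) t))
    (fun s => (hu.continuous.uncurry_left s).norm.pow 2)
    (continuous_const.mul (hu.continuous.inner (continuous_uncurry_deriv_left hu)))
    (fun s x => ?_) 0 L t
  exact (hasDerivAt_left_of_differentiableAt_uncurry
    (hu.differentiable one_ne_zero (s, x))).differentiableAt.hasDerivAt.norm_sq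

end Mass

section DampedSchrodinger

/-- Classical solutions, of period `L` in `x`, of the damped Schrödinger equation
`i u_t + u_xx - V u + i γ u = f`. Regularity and periodicity are asked for at all times `t : ℝ`,
the equation itself only for `t ≥ 0`. The potential `V` is real-valued and may depend on `u`: the
defocusing `p`-NLS is the case `V = ‖u‖ ^ (p - 1)`. -/
structure IsDampedSchrodingerSolution (L γ : ℝ) (V : ℝ → ℝ → ℝ) (f : ℝ → ℂ) (u : ℝ → ℝ → ℂ) :
    Prop where
  contDiff_uncurry : ContDiff ℝ 1 (Function.uncurry u)
  contDiff_space (t : ℝ) : ContDiff ℝ 2 (u t)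
  periodic (t : ℝ) : Function.Periodic (u t) L
  equation (t : ℝ) (ht : 0 ≤ t) (x : ℝ) :
    I * deriv (fun s => u s x) t + deriv (deriv (u t)) x - V t x * u t x + I * γ * u t x = f x

lemma inner_eq_of_dampedSchrodinger_eq {γ r : ℝ} {z z_t z_xx w : ℂ}
    (h : I * z_t + z_xx - r * z + I * γ * z = w) :
    inner ℝ z z_t = inner ℝ z (I * z_xx) - γ * ‖z‖ ^ 2 - inner ℝ z (I * w) := by
  have hz_t : z_t = I * z_xx - r • (I * z) - γ • z - I * w := by
    simp only [real_smul]
    linear_combination (-I) * h + (z_t + γ * z) * I_sq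
  rw [hz_t]
  simp only [inner_sub_right, real_inner_smul_right, real_inner_I_mul_self,
    real_inner_self_eq_norm_sq, mul_zero, sub_zero]

lemma two_mul_inner_le_of_dampedSchrodinger_eq {γ r : ℝ} (hγ : 0 < γ) {z z_t z_xx w : ℂ}
    (h : I * z_t + z_xx - r * z + I * γ * z = w) :
    2 * inner ℝ z z_t ≤ 2 * inner ℝ z (I * z_xx) - γ * ‖z‖ ^ 2 + γ⁻¹ * ‖w‖ ^ 2 := by
  have hyoung := two_mul_real_inner_le_mul_sq_add_inv_mul_sq hγ z (-(I * w))
  rw [inner_neg_right, norm_neg, norm_mul, norm_I, one_mul] at hyoung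
  linarith [inner_eq_of_dampedSchrodinger_eq h]

variable {L γ : ℝ} {V : ℝ → ℝ → ℝ} {f : ℝ → ℂ} {u : ℝ → ℝ → ℂ}

lemma IsDampedSchrodingerSolution.of_contDiff_two (hu : ContDiff ℝ 2 (Function.uncurry u))
    (hper : ∀ t, Function.Periodic (u t) L)
    (heq : ∀ t, 0 ≤ t → ∀ x, I * deriv (fun s => u s x) t + deriv (deriv (u t)) x
      - V t x * u t x + I * γ * u t x = f x) :
    IsDampedSchrodingerSolution L γ V f u where
  contDiff_uncurry := hu.of_le one_le_two
  contDiff_space _ := hu.comp (contDiff_const.prodMk contDiff_id)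
  periodic := hper
  equation := heq

lemma IsDampedSchrodingerSolution.deriv_mass_le (hu : IsDampedSchrodingerSolution L γ V f u)
    (hL : 0 ≤ L) (hγ : 0 < γ) (hf : IntervalIntegrable (fun x => ‖f x‖ ^ 2) volume 0 L)
    {t : ℝ} (ht : 0 ≤ t) :
    deriv (fun s => mass L (u s)) t ≤ -γ * mass L (u t) + γ⁻¹ * mass L f := by
  have hcont : Continuous (u t) := (hu.contDiff_space t).continuous
  have hcont_t : Continuous fun x => deriv (fun s => u s x) t :=
    (continuous_uncurry_deriv_left hu.contDiff_uncurry).uncurry_left t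
  have hcont_xx : Continuous (deriv (deriv (u t))) :=
    (hu.contDiff_space t).deriv'.continuous_deriv le_rfl
  have hint_xx : IntervalIntegrable
      (fun x => 2 * inner ℝ (u t x) (I * deriv (deriv (u t)) x)) volume 0 L :=
    Continuous.intervalIntegrable (by fun_prop) _ _
  have hint_mass : IntervalIntegrable (fun x => γ * ‖u t x‖ ^ 2) volume 0 L :=
    Continuous.intervalIntegrable (by fun_prop) _ _
  calc deriv (fun s => mass L (u s)) t
    _ = ∫ x in (0 : ℝ)..L, 2 * inner ℝ (u t x) (deriv (fun s => u s x) t) :=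
      (hasDerivAt_mass hu.contDiff_uncurry L t).deriv
    _ ≤ ∫ x in (0 : ℝ)..L, (2 * inner ℝ (u t x) (I * deriv (deriv (u t)) x)
          - γ * ‖u t x‖ ^ 2 + γ⁻¹ * ‖f x‖ ^ 2) :=
      intervalIntegral.integral_mono hL (Continuous.intervalIntegrable (by fun_prop) _ _)
        ((hint_xx.sub hint_mass).add (hf.const_mul γ⁻¹))
        fun x => two_mul_inner_le_of_dampedSchrodinger_eq hγ (hu.equation t ht x)
    _ = -γ * mass L (u t) + γ⁻¹ * mass L f := by
      rw [intervalIntegral.integral_add (hint_xx.sub hint_mass) (hf.const_mul γ⁻¹),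
        intervalIntegral.integral_sub hint_xx hint_mass]
      simp only [intervalIntegral.integral_const_mul, mass,
        integral_inner_I_mul_deriv_deriv_eq_zero (hu.contDiff_space t) (hu.periodic t)]
      ring

theorem stmt11_general (hu : IsDampedSchrodingerSolution L γ V f u) (hL : 0 ≤ L) (hγ : 0 < γ)
    (hf : IntervalIntegrable (fun x => ‖f x‖ ^ 2) volume 0 L) :
    limsup (fun t => mass L (u t)) atTop ≤ (γ ^ 2)⁻¹ * mass L f := by
  calc limsup (fun t => mass L (u t)) atTop
    _ ≤ γ⁻¹ * mass L f / γ :=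
      limsup_le_of_hasDerivAt_of_le_neg_mul_add hγ
        (fun t _ => (hasDerivAt_mass hu.contDiff_uncurry L t).differentiableAt.hasDerivAt)
        (fun _ ht => hu.deriv_mass_le hL hγ hf ht)
        (isCoboundedUnder_le_of_le atTop fun t => mass_nonneg hL (u t))
    _ = (γ ^ 2)⁻¹ * mass L f := by field_simp

end DampedSchrodinger

/-- Asymptotic `L²` bound for the periodic forced–damped defocusing p-NLS:
`limsup_{t→∞} ∫₀^{2π}|u(t)|² dx ≤ γ⁻² ∫₀^{2π}|f|² dx`. -/
theorem stmt11 (p : ℕ) (hp : Odd p) (hp1 : 1 < p) (γ : ℝ) (hγ : 0 < γ)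
    (f : ℝ → ℂ) (hf : Continuous f) (hfper : Function.Periodic f (2 * Real.pi))
    (u : ℝ → ℝ → ℂ)
    (hsmooth : ContDiff ℝ (⊤ : ℕ∞) (fun q : ℝ × ℝ => u q.1 q.2))
    (hper : ∀ t x : ℝ, u t (x + 2 * Real.pi) = u t x)
    (heq : ∀ t : ℝ, 0 ≤ t → ∀ x : ℝ,
      Complex.I * deriv (fun r => u r x) t
        + deriv (deriv (fun y => u t y)) x
        - (‖u t x‖ : ℂ) ^ (p - 1) * u t x
        + Complex.I * (γ : ℂ) * u t x = f x) :
    Filter.limsup (fun t : ℝ => ∫ x in (0:ℝ)..(2 * Real.pi), ‖u t x‖^2) Filter.atTop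
      ≤ (γ^2)⁻¹ * ∫ x in (0:ℝ)..(2 * Real.pi), ‖f x‖^2 := by
  have hu : IsDampedSchrodingerSolution (2 * Real.pi) γ (fun t x => ‖u t x‖ ^ (p - 1)) f u :=
    .of_contDiff_two (hsmooth.of_le (by norm_cast)) hper (by simpa only [ofReal_pow] using heq)
  exact stmt11_general hu (by positivity) hγ ((hf.norm.pow 2).intervalIntegrable 0 _)
end

section
/- Let p ≥ 5 be odd and γ > 0. There exists a constant C, depending only on p, γ, ∫₀^{2π}|f|²dx and ∫₀^{2π}|f'|²dx, such that the following holds: for every continuously differentiable 2π-periodic f : ℝ → ℂ and every smooth u = u(t,x), defined for all t ≥ 0 and 2π-periodic in x, satisfying i∂ₜu + ∂ₓ²u − |u|^{p−1}u + iγu = f(x) pointwise, one has limsup_{t→∞} ( (1/2)∫₀^{2π} |∂ₓu(t,x)|² dx + (1/(p+1))∫₀^{2π} |u(t,x)|^{p+1} dx ) ≤ C. Combined with the L² bound, limsup_{t→∞} ( ∫₀^{2π} |u(t,x)|² dx + ∫₀^{2π} |∂ₓu(t,x)|² dx ) is bounded by a constant depending only on p, γ and the H¹(𝕋) norm of f;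 i.e. the equation admits an absorbing set in H¹(𝕋). -/
open scoped BigOperators

/-!
Let `e = ½‖u‖² + ½‖∂ₓu‖² + ‖u‖^(p+1)/(p+1)`. Multiplying the equation by the conjugates of
`∂ₜu + γu` and `u` gives a local balance law `∂ₜe = ∂ₓΦ - d`: the nonlinear and dispersive
contributions cancel up to the `x`-derivative of a periodic flux `Φ`, and what is left is
`d = γ(‖u‖² + ‖∂ₓu‖² + ‖u‖^(p+1))` plus terms linear in `f` or `f'`. Young's inequality absorbs
half of `d` into the forcing terms, so the energy `E = ∫ e` satisfies `E' ≤ -γE + K` with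
`K = ∫ (‖f‖² + ‖f'‖²)/(2γ) + (2/γ)^p ‖f‖^(p+1)`, and the Sobolev embedding `H¹ ⊂ L^∞` bounds `K`
in terms of `∫ ‖f‖²` and `∫ ‖f'‖²`. By Grönwall's inequality `limsup E ≤ K/γ`.
-/

section

open Function Filter MeasureTheory Set
open scoped InnerProductSpace Topology

section PartialDerivatives

variable {E : Type*} [NormedAddCommGroup E] [NormedSpace ℝ E]

/-- The partial derivative `∂ₜu` of a function `u = u(t, x)`. -/
noncomputable def timeDeriv (u : ℝ → ℝ → E) (t x : ℝ) : E := deriv (fun s => u s x) t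

/-- The partial derivative `∂ₓu` of a function `u = u(t, x)`. -/
noncomputable def spaceDeriv (u : ℝ → ℝ → E) (t x : ℝ) : E := deriv (u t) x

end PartialDerivatives

local notation "∂ₜ" => timeDeriv
local notation "∂ₓ" => spaceDeriv

section PartialDerivatives

variable {E : Type*} [NormedAddCommGroup E] [NormedSpace ℝ E] {u : ℝ → ℝ → E}

lemma hasDerivAt_timeDeriv (hu : Differentiable ℝ (uncurry u)) (t x : ℝ) :
    HasDerivAt (fun s => u s x) (∂ₜ u t x) t :=
  (hu.comp (differentiable_id.prodMk (differentiable_const x)) t).hasDerivAt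

lemma hasDerivAt_spaceDeriv (hu : Differentiable ℝ (uncurry u)) (t x : ℝ) :
    HasDerivAt (u t) (∂ₓ u t x) x :=
  (hu.comp ((differentiable_const t).prodMk differentiable_id) x).hasDerivAt

lemma timeDeriv_eq_fderiv (hu : Differentiable ℝ (uncurry u)) (t x : ℝ) :
    ∂ₜ u t x = fderiv ℝ (uncurry u) (t, x) (1, 0) :=
  ((hu (t, x)).hasFDerivAt.comp_hasDerivAt (f := fun s => (s, x)) t
    ((hasDerivAt_id t).prodMk (hasDerivAt_const t x))).deriv

lemma spaceDeriv_eq_fderiv (hu : Differentiable ℝ (uncurry u)) (t x : ℝ) :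
    ∂ₓ u t x = fderiv ℝ (uncurry u) (t, x) (0, 1) :=
  ((hu (t, x)).hasFDerivAt.comp_hasDerivAt x
    ((hasDerivAt_const x t).prodMk (hasDerivAt_id x))).deriv

lemma uncurry_timeDeriv (hu : Differentiable ℝ (uncurry u)) :
    uncurry (∂ₜ u) = fun q => fderiv ℝ (uncurry u) q (1, 0) :=
  funext fun q => timeDeriv_eq_fderiv hu q.1 q.2

lemma uncurry_spaceDeriv (hu : Differentiable ℝ (uncurry u)) :
    uncurry (∂ₓ u) = fun q => fderiv ℝ (uncurry u) q (0, 1) :=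
  funext fun q => spaceDeriv_eq_fderiv hu q.1 q.2

variable {n : WithTop ℕ∞}

lemma contDiff_timeDeriv (hu : ContDiff ℝ (n + 1) (uncurry u)) :
    ContDiff ℝ n (uncurry (∂ₜ u)) := by
  rw [uncurry_timeDeriv (hu.differentiable (by simp))]
  exact (hu.fderiv_right le_rfl).clm_apply contDiff_const

lemma contDiff_spaceDeriv (hu : ContDiff ℝ (n + 1) (uncurry u)) :
    ContDiff ℝ n (uncurry (∂ₓ u)) := by
  rw [uncurry_spaceDeriv (hu.differentiable (by simp))]
  exact (hu.fderiv_right le_rfl).clm_apply contDiff_const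

lemma timeDeriv_spaceDeriv_comm (hu : ContDiff ℝ 2 (uncurry u)) (t x : ℝ) :
    ∂ₜ (∂ₓ u) t x = ∂ₓ (∂ₜ u) t x := by
  have hd : Differentiable ℝ (uncurry u) := hu.differentiable two_ne_zero
  have hd₂ : Differentiable ℝ (fderiv ℝ (uncurry u)) :=
    (hu.fderiv_right (m := 1) (by norm_num)).differentiable one_ne_zero
  have fderiv_apply (v w : ℝ × ℝ) :
      fderiv ℝ (fun q => fderiv ℝ (uncurry u) q v) (t, x) w =
        fderiv ℝ (fderiv ℝ (uncurry u)) (t, x) w v := by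
    simp [fderiv_clm_apply (hd₂ _) (differentiableAt_const v)]
  rw [timeDeriv_eq_fderiv, spaceDeriv_eq_fderiv, uncurry_spaceDeriv hd, uncurry_timeDeriv hd,
    fderiv_apply, fderiv_apply]
  · exact hu.contDiffAt.isSymmSndFDerivAt (by simp) _ _
  · exact (contDiff_timeDeriv (n := 1) hu).differentiable one_ne_zero
  · exact (contDiff_spaceDeriv (n := 1) hu).differentiable one_ne_zero

lemma periodic_timeDeriv {L : ℝ} (hu : ∀ t, Periodic (u t) L) (t : ℝ) :
    Periodic (∂ₜ u t) L :=
  fun x => congrArg (deriv · t) (funext fun s => hu s x)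

lemma periodic_spaceDeriv {L t : ℝ} (hu : Periodic (u t) L) : Periodic (∂ₓ u t) L := fun x =>
  (deriv_comp_add_const (u t) L x).symm.trans (congrArg (deriv · x) (funext hu))

lemma hasDerivAt_integral_timeDeriv (hu : ContDiff ℝ 1 (uncurry u)) (a b t : ℝ) :
    HasDerivAt (fun s => ∫ x in a..b, u s x) (∫ x in a..b, ∂ₜ u t x) t := by
  have hc : Continuous (uncurry u) := hu.continuous
  have hc' : Continuous (uncurry (∂ₜ u)) := (contDiff_timeDeriv (n := 0) (by simpa)).continuous
  obtain ⟨M, hM⟩ := ((isCompact_Icc (a := t - 1) (b := t + 1)).prod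
    (isCompact_uIcc (a := a) (b := b))).exists_bound_of_continuousOn hc'.continuousOn
  have hbound (x : ℝ) (hx : x ∈ uIoc a b) (s : ℝ) (hs : s ∈ Icc (t - 1) (t + 1)) :
      ‖∂ₜ u s x‖ ≤ M := hM (s, x) ⟨hs, uIoc_subset_uIcc hx⟩
  exact (intervalIntegral.hasDerivAt_integral_of_dominated_loc_of_deriv_le
    (Icc_mem_nhds (by linarith) (by linarith))
    (.of_forall fun s => (hc.uncurry_left s).aestronglyMeasurable)
    ((hc.uncurry_left t).intervalIntegrable _ _)
    (hc'.uncurry_left t).aestronglyMeasurable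
    (.of_forall hbound) intervalIntegrable_const
    (.of_forall fun x _ s _ =>
      hasDerivAt_timeDeriv (hu.differentiable one_ne_zero) s x)).2

end PartialDerivatives

section OneVariable

lemma integral_deriv_eq_zero_of_periodic {F : Type*} [NormedAddCommGroup F] [NormedSpace ℝ F]
    [CompleteSpace F] {g : ℝ → F} {L : ℝ} (hg : ContDiff ℝ 1 g) (hper : Periodic g L) :
    ∫ x in 0..L, deriv g x = 0 := by
  rw [intervalIntegral.integral_deriv_of_contDiffOn_uIcc hg.contDiffOn, hper.eq, sub_self]

variable {F : Type*} [NormedAddCommGroup F] [InnerProductSpace ℝ F]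

lemma norm_sq_sub_norm_sq_le {g : ℝ → F} (hg : ContDiff ℝ 1 g) {a b x y : ℝ}
    (hx : x ∈ Icc a b) (hy : y ∈ Icc a b) :
    ‖g x‖ ^ 2 - ‖g y‖ ^ 2 ≤ (∫ z in a..b, ‖g z‖ ^ 2) + ∫ z in a..b, ‖deriv g z‖ ^ 2 := by
  have hab : a ≤ b := hx.1.trans hx.2
  have hc : Continuous g := hg.continuous
  have hc' : Continuous (deriv g) := hg.continuous_deriv_one
  have hderiv (z : ℝ) : deriv (fun z => ‖g z‖ ^ 2) z = 2 * ⟪g z, deriv g z⟫_ℝ :=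
    (hg.differentiable one_ne_zero z).hasDerivAt.norm_sq.deriv
  have hle (z : ℝ) : ‖2 * ⟪g z, deriv g z⟫_ℝ‖ ≤ ‖g z‖ ^ 2 + ‖deriv g z‖ ^ 2 := by
    rw [norm_mul, Real.norm_two]
    nlinarith [abs_real_inner_le_norm (g z) (deriv g z), two_mul_le_add_sq ‖g z‖ ‖deriv g z‖,
      Real.norm_eq_abs ⟪g z, deriv g z⟫_ℝ]
  have hsub : uIoc y x ⊆ uIoc a b := by
    rw [uIoc_of_le hab]
    exact Ioc_subset_Ioc (le_min hy.1 hx.1) (max_le hy.2 hx.2)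
  have hcont : Continuous fun z => ‖g z‖ ^ 2 + ‖deriv g z‖ ^ 2 := by fun_prop
  calc ‖g x‖ ^ 2 - ‖g y‖ ^ 2 = ∫ z in y..x, 2 * ⟪g z, deriv g z⟫_ℝ := by
        simp only [← hderiv]
        exact (intervalIntegral.integral_deriv_of_contDiffOn_uIcc
          (hg.norm_sq ℝ).contDiffOn).symm
    _ ≤ |∫ z in y..x, (‖g z‖ ^ 2 + ‖deriv g z‖ ^ 2)| :=
        (Real.le_norm_self _).trans (intervalIntegral.norm_integral_le_abs_of_norm_le
          (.of_forall hle) (hcont.intervalIntegrable _ _))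
    _ ≤ |∫ z in a..b, (‖g z‖ ^ 2 + ‖deriv g z‖ ^ 2)| :=
        intervalIntegral.abs_integral_mono_interval hsub
          (.of_forall fun z => by positivity) (hcont.intervalIntegrable _ _)
    _ = ∫ z in a..b, (‖g z‖ ^ 2 + ‖deriv g z‖ ^ 2) :=
        abs_of_nonneg (intervalIntegral.integral_nonneg hab fun z _ => by positivity)
    _ = _ := intervalIntegral.integral_add ((hc.norm.pow 2).intervalIntegrable _ _)
        ((hc'.norm.pow 2).intervalIntegrable _ _)

lemma norm_sq_le_sobolev {g : ℝ → F} (hg : ContDiff ℝ 1 g) {a b x : ℝ} (hab : a < b)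
    (hx : x ∈ Icc a b) :
    ‖g x‖ ^ 2 ≤ (1 + 1 / (b - a)) * (∫ z in a..b, ‖g z‖ ^ 2) +
      ∫ z in a..b, ‖deriv g z‖ ^ 2 := by
  set I₀ := ∫ z in a..b, ‖g z‖ ^ 2
  set I₁ := ∫ z in a..b, ‖deriv g z‖ ^ 2
  have hlen : 0 < b - a := sub_pos.2 hab
  have haverage : (b - a) * (‖g x‖ ^ 2 - (I₀ + I₁)) ≤ I₀ := by
    rw [← smul_eq_mul, ← intervalIntegral.integral_const]
    refine intervalIntegral.integral_mono_on hab.le (by simp)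
      ((hg.continuous.norm.pow 2).intervalIntegrable _ _) fun y hy => ?_
    linarith [norm_sq_sub_norm_sq_le hg hx hy]
  have hdiv : ‖g x‖ ^ 2 - (I₀ + I₁) ≤ I₀ / (b - a) := (le_div_iff₀' hlen).2 haverage
  linear_combination hdiv

end OneVariable

section RealInequalities

lemma rpow_mul_le_add_rpow {ε v w p : ℝ} (hε : 0 < ε) (hv : 0 ≤ v) (hw : 0 ≤ w) (hp : 0 ≤ p) :
    v ^ p * w ≤ ε * v ^ (p + 1) + (1 / ε) ^ p * w ^ (p + 1) := by
  have hp1 : p + 1 ≠ 0 := by positivity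
  rcases le_total w (ε * v) with hwv | hvw
  · calc v ^ p * w ≤ v ^ p * (ε * v) := by gcongr
      _ = ε * v ^ (p + 1) := by rw [Real.rpow_add_one' hv hp1]; ring
      _ ≤ _ := le_add_of_nonneg_right (by positivity)
  · calc v ^ p * w ≤ (1 / ε * w) ^ p * w := by
          gcongr
          rwa [one_div_mul_eq_div, le_div_iff₀' hε]
      _ = (1 / ε) ^ p * w ^ (p + 1) := by
          rw [Real.mul_rpow (by positivity) hw, Real.rpow_add_one' hw hp1, mul_assoc]
      _ ≤ _ := le_add_of_nonneg_left (by positivity)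

lemma mul_le_add_sq_div {γ : ℝ} (hγ : 0 < γ) (v w : ℝ) :
    v * w ≤ γ / 2 * v ^ 2 + w ^ 2 / (2 * γ) := by
  have hsq : γ / 2 * v ^ 2 + w ^ 2 / (2 * γ) - v * w = (γ * v - w) ^ 2 / (2 * γ) := by
    field_simp
    ring
  linarith [show 0 ≤ (γ * v - w) ^ 2 / (2 * γ) by positivity]

lemma tendsto_gronwallBound_atTop (δ ε : ℝ) {K : ℝ} (hK : K < 0) :
    Tendsto (gronwallBound δ K ε) atTop (𝓝 (-(ε / K))) := by
  have hexp : Tendsto (fun t => Real.exp (K * t)) atTop (𝓝 0) :=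
    Real.tendsto_exp_atBot.comp (tendsto_id.const_mul_atTop_of_neg hK)
  rw [gronwallBound_of_K_ne_0 hK.ne]
  simpa using (hexp.const_mul δ).add ((hexp.sub_const 1).const_mul (ε / K))

lemma le_gronwallBound_of_hasDerivAt_le {G G' : ℝ → ℝ} {K ε : ℝ}
    (hG : ∀ t, 0 ≤ t → HasDerivAt G (G' t) t) (hle : ∀ t, 0 ≤ t → G' t ≤ K * G t + ε)
    {t : ℝ} (ht : 0 ≤ t) : G t ≤ gronwallBound (G 0) K ε t := by
  simpa using le_gronwallBound_of_liminf_deriv_right_le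
    (fun s hs => (hG s hs.1).continuousAt.continuousWithinAt)
    (fun s hs r hr => (hG s hs.1).hasDerivWithinAt.liminf_right_slope_le hr)
    le_rfl (fun s hs => hle s hs.1) t (right_mem_Icc.2 ht)

lemma limsup_le_of_hasDerivAt_le_neg_mul_add {G G' h : ℝ → ℝ} {γ K c : ℝ} (hγ : 0 < γ)
    (hG : ∀ t, 0 ≤ t → HasDerivAt G (G' t) t) (hle : ∀ t, 0 ≤ t → G' t ≤ -γ * G t + K)
    (hc : 0 ≤ c) (hh₀ : ∀ t, 0 ≤ h t) (hh : ∀ t, h t ≤ c * G t) :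
    limsup h atTop ≤ c * (K / γ) := by
  have hlim : Tendsto (fun t => c * gronwallBound (G 0) (-γ) K t) atTop (𝓝 (c * (K / γ))) := by
    simpa [div_neg] using (tendsto_gronwallBound_atTop (G 0) K (neg_neg_of_pos hγ)).const_mul c
  have hbound : h ≤ᶠ[atTop] fun t => c * gronwallBound (G 0) (-γ) K t := by
    filter_upwards [eventually_ge_atTop 0] with t ht
    exact (hh t).trans
      (mul_le_mul_of_nonneg_left (le_gronwallBound_of_hasDerivAt_le hG hle ht) hc)
  calc limsup h atTop ≤ limsup (fun t => c * gronwallBound (G 0) (-γ) K t) atTop :=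
        limsup_le_limsup hbound (isCoboundedUnder_le_of_le atTop hh₀) hlim.isBoundedUnder_le
    _ = c * (K / γ) := hlim.limsup_eq

end RealInequalities

section EnergyDensity

variable {F : Type*} [NormedAddCommGroup F] [InnerProductSpace ℝ F] {p : ℝ} {u : ℝ → ℝ → F}

/-- The `H¹` energy density `½‖u‖² + ½‖∂ₓu‖² + ‖u‖^(p+1)/(p+1)`: the Hamiltonian density of the
defocusing p-NLS plus half the mass density, so that its integral controls the `H¹` norm. -/
noncomputable def energyDensity (p : ℝ) (u : ℝ → ℝ → F) (t x : ℝ) : ℝ :=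
  1 / 2 * ‖u t x‖ ^ 2 + 1 / 2 * ‖∂ₓ u t x‖ ^ 2 + 1 / (p + 1) * ‖u t x‖ ^ (p + 1)

/-- The integral of the `H¹` energy density over one period `[0, L]`. -/
noncomputable def energy (p L : ℝ) (u : ℝ → ℝ → F) (t : ℝ) : ℝ :=
  ∫ x in 0..L, energyDensity p u t x

lemma contDiff_energyDensity (hp : 0 < p) (hu : ContDiff ℝ 2 (uncurry u)) :
    ContDiff ℝ 1 (uncurry (energyDensity p u)) := by
  have hu₁ : ContDiff ℝ 1 (uncurry u) := hu.of_le one_le_two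
  have hux : ContDiff ℝ 1 (uncurry (∂ₓ u)) := contDiff_spaceDeriv hu
  exact ((contDiff_const.mul (hu₁.norm_sq ℝ)).add (contDiff_const.mul (hux.norm_sq ℝ))).add
    (contDiff_const.mul (hu₁.norm_rpow (by linarith)))

lemma timeDeriv_energyDensity (hp : 0 < p) (hu : ContDiff ℝ 2 (uncurry u)) (t x : ℝ) :
    ∂ₜ (energyDensity p u) t x =
      (1 + ‖u t x‖ ^ (p - 1)) * ⟪u t x, ∂ₜ u t x⟫_ℝ + ⟪∂ₓ u t x, ∂ₓ (∂ₜ u) t x⟫_ℝ := by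
  have hut := hasDerivAt_timeDeriv (hu.differentiable two_ne_zero) t x
  have huxt := hasDerivAt_timeDeriv
    ((contDiff_spaceDeriv (n := 1) hu).differentiable one_ne_zero) t x
  have hpow := (hasFDerivAt_norm_rpow (u t x) (p := p + 1) (by linarith)).comp_hasDerivAt t hut
  refine (((hut.norm_sq.const_mul (1 / 2)).add (huxt.norm_sq.const_mul (1 / 2))).add
    (hpow.const_mul (1 / (p + 1)))).deriv.trans ?_
  rw [timeDeriv_spaceDeriv_comm hu, show p + 1 - 2 = p - 1 by ring]
  simp only [smul_apply, innerSL_apply_apply, smul_eq_mul]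
  field_simp
  ring

lemma hasDerivAt_energy (hp : 0 < p) (hu : ContDiff ℝ 2 (uncurry u)) (L t : ℝ) :
    HasDerivAt (energy p L u) (∫ x in 0..L, ∂ₜ (energyDensity p u) t x) t :=
  hasDerivAt_integral_timeDeriv (contDiff_energyDensity hp hu) 0 L t

lemma energy_eq (hp : 0 < p) (hu : ContDiff ℝ 1 (uncurry u)) (L t : ℝ) :
    energy p L u t = 1 / 2 * (∫ x in 0..L, ‖u t x‖ ^ 2) +
      1 / 2 * (∫ x in 0..L, ‖∂ₓ u t x‖ ^ 2) +
      1 / (p + 1) * ∫ x in 0..L, ‖u t x‖ ^ (p + 1) := by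
  have hut : Continuous (u t) := hu.continuous.uncurry_left t
  have huxt : Continuous (∂ₓ u t) :=
    (contDiff_spaceDeriv (n := 0) (by simpa)).continuous.uncurry_left t
  have hpow : Continuous fun x => ‖u t x‖ ^ (p + 1) :=
    hut.norm.rpow_const fun _ => .inr (by linarith)
  simp only [energy, energyDensity]
  rw [intervalIntegral.integral_add, intervalIntegral.integral_add,
    intervalIntegral.integral_const_mul, intervalIntegral.integral_const_mul,
    intervalIntegral.integral_const_mul]
  all_goals exact Continuous.intervalIntegrable (by fun_prop) _ _

end EnergyDensity

section ForcedDampedNLS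

variable {p γ L : ℝ} {f : ℝ → ℂ} {u : ℝ → ℝ → ℂ}

/-- `u` is a classical solution, `L`-periodic in space, of the forced–damped defocusing p-NLS
`i∂ₜu + ∂ₓ²u - |u|^(p-1)u + iγu = f` for times `t ≥ 0`. Regularity and periodicity are imposed for
all real `t`, so that no one-sided derivatives occur at `t = 0`. -/
structure IsForcedDampedNLSSolution (p γ L : ℝ) (f : ℝ → ℂ) (u : ℝ → ℝ → ℂ) : Prop where
  contDiff : ContDiff ℝ 2 (uncurry u)
  periodic : ∀ t, Periodic (u t) L
  equation : ∀ t, 0 ≤ t → ∀ x,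
    Complex.I * ∂ₜ u t x + ∂ₓ (∂ₓ u) t x - (‖u t x‖ ^ (p - 1) : ℝ) * u t x +
      Complex.I * γ * u t x = f x

/-- The flux `Φ` in the local energy balance `∂ₜe = ∂ₓΦ - d`. -/
noncomputable def energyFlux (γ : ℝ) (f : ℝ → ℂ) (u : ℝ → ℝ → ℂ) (t x : ℝ) : ℝ :=
  ⟪∂ₓ u t x, ∂ₜ u t x + γ * u t x + Complex.I * f x - Complex.I * u t x⟫_ℝ

/-- The sink `d` in the local energy balance `∂ₜe = ∂ₓΦ - d`: damping plus the work of the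
forcing. -/
noncomputable def energySink (p γ : ℝ) (f : ℝ → ℂ) (u : ℝ → ℝ → ℂ) (t x : ℝ) : ℝ :=
  γ * (‖u t x‖ ^ 2 + ‖∂ₓ u t x‖ ^ 2 + ‖u t x‖ ^ (p + 1)) +
    (1 + ‖u t x‖ ^ (p - 1)) * ⟪u t x, Complex.I * f x⟫_ℝ +
    ⟪∂ₓ u t x, Complex.I * deriv f x⟫_ℝ

lemma contDiff_energyFlux (hf : ContDiff ℝ 1 f) (hu : ContDiff ℝ 2 (uncurry u)) (t : ℝ) :
    ContDiff ℝ 1 (energyFlux γ f u t) := by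
  have contDiff_slice {v : ℝ → ℝ → ℂ} (hv : ContDiff ℝ 1 (uncurry v)) : ContDiff ℝ 1 (v t) :=
    hv.comp (contDiff_prodMk_right t)
  have h₀ : ContDiff ℝ 1 (u t) := contDiff_slice (hu.of_le one_le_two)
  have hₜ : ContDiff ℝ 1 (∂ₜ u t) := contDiff_slice (contDiff_timeDeriv hu)
  have hₓ : ContDiff ℝ 1 (∂ₓ u t) := contDiff_slice (contDiff_spaceDeriv hu)
  exact hₓ.inner ℝ (((hₜ.add (contDiff_const.mul h₀)).add (contDiff_const.mul hf)).sub
    (contDiff_const.mul h₀))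

lemma periodic_energyFlux (hf : Periodic f L) (hu : ∀ t, Periodic (u t) L) (t : ℝ) :
    Periodic (energyFlux γ f u t) L := fun x => by
  simp only [energyFlux, periodic_spaceDeriv (hu t) x, periodic_timeDeriv hu t x, hu t x, hf x]

lemma spaceDeriv_energyFlux (hf : ContDiff ℝ 1 f) (hu : ContDiff ℝ 2 (uncurry u)) (t x : ℝ) :
    ∂ₓ (energyFlux γ f u) t x =
      ⟪∂ₓ (∂ₓ u) t x, ∂ₜ u t x + γ * u t x + Complex.I * f x - Complex.I * u t x⟫_ℝ +
      ⟪∂ₓ u t x, ∂ₓ (∂ₜ u) t x + γ * ∂ₓ u t x + Complex.I * deriv f x -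
        Complex.I * ∂ₓ u t x⟫_ℝ := by
  have h₀ := hasDerivAt_spaceDeriv (hu.differentiable two_ne_zero) t x
  have hₓ := hasDerivAt_spaceDeriv
    ((contDiff_spaceDeriv (n := 1) hu).differentiable one_ne_zero) t x
  have hₜ := hasDerivAt_spaceDeriv
    ((contDiff_timeDeriv (n := 1) hu).differentiable one_ne_zero) t x
  have hf' := (hf.differentiable one_ne_zero x).hasDerivAt
  rw [add_comm]
  exact (hₓ.inner ℝ (((hₜ.add (h₀.const_mul _)).add (hf'.const_mul _)).sub
    (h₀.const_mul _))).deriv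

lemma inner_I_mul_self (z : ℂ) : ⟪z, Complex.I * z⟫_ℝ = 0 :=
  real_inner_I_smul_self ℂ z

-- With `z = u`, `v = ∂ₓ²u` and `N = |u|^(p-1)`, this is the cancellation of the dispersive and
-- nonlinear terms in the energy balance.
lemma one_add_mul_inner_I_mul_sub (N : ℝ) (z v : ℂ) :
    (1 + N) * ⟪z, Complex.I * (v - N * z)⟫_ℝ =
      ⟪v, Complex.I * (v - N * z) - Complex.I * z⟫_ℝ := by
  simp only [Complex.inner, Complex.mul_re, Complex.mul_im, Complex.sub_re, Complex.sub_im,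
    Complex.conj_re, Complex.conj_im, Complex.I_re, Complex.I_im, Complex.ofReal_re,
    Complex.ofReal_im]
  ring

namespace IsForcedDampedNLSSolution

lemma timeDeriv_eq (hu : IsForcedDampedNLSSolution p γ L f u) {t : ℝ} (ht : 0 ≤ t) (x : ℝ) :
    ∂ₜ u t x = Complex.I * (∂ₓ (∂ₓ u) t x - (‖u t x‖ ^ (p - 1) : ℝ) * u t x) - γ * u t x -
      Complex.I * f x := by
  linear_combination (-Complex.I) * hu.equation t ht x +
    (∂ₜ u t x + γ * u t x) * Complex.I_mul_I

theorem timeDeriv_energyDensity_eq (hu : IsForcedDampedNLSSolution p γ L f u) (hp : 1 ≤ p)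
    (hf : ContDiff ℝ 1 f) {t : ℝ} (ht : 0 ≤ t) (x : ℝ) :
    ∂ₜ (energyDensity p u) t x = ∂ₓ (energyFlux γ f u) t x - energySink p γ f u t x := by
  set N : ℝ := ‖u t x‖ ^ (p - 1)
  set w : ℂ := Complex.I * (∂ₓ (∂ₓ u) t x - N * u t x)
  have hw : ∂ₜ u t x = w - (γ : ℝ) • u t x - Complex.I * f x := hu.timeDeriv_eq ht x
  have hpow : ‖u t x‖ ^ (p + 1) = N * ‖u t x‖ ^ 2 := by
    rw [show p + 1 = p - 1 + 2 by ring, Real.rpow_add_of_nonneg (norm_nonneg _)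
      (sub_nonneg.2 hp) zero_le_two, Real.rpow_two]
  have hflux : ∂ₜ u t x + γ * u t x + Complex.I * f x - Complex.I * u t x =
      w - Complex.I * u t x := by
    rw [hw, Complex.real_smul]
    ring
  have hwork : (1 + N) * ⟪u t x, ∂ₜ u t x⟫_ℝ =
      ⟪∂ₓ (∂ₓ u) t x, w - Complex.I * u t x⟫_ℝ -
        (1 + N) * (γ * ‖u t x‖ ^ 2 + ⟪u t x, Complex.I * f x⟫_ℝ) := by
    rw [← one_add_mul_inner_I_mul_sub, hw, inner_sub_right, inner_sub_right,
      real_inner_smul_right, real_inner_self_eq_norm_sq]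
    ring
  have hgrad : ⟪∂ₓ u t x, ∂ₓ (∂ₜ u) t x + γ * ∂ₓ u t x + Complex.I * deriv f x -
        Complex.I * ∂ₓ u t x⟫_ℝ =
      ⟪∂ₓ u t x, ∂ₓ (∂ₜ u) t x⟫_ℝ + γ * ‖∂ₓ u t x‖ ^ 2 +
        ⟪∂ₓ u t x, Complex.I * deriv f x⟫_ℝ := by
    rw [← Complex.real_smul, inner_sub_right, inner_add_right, inner_add_right,
      real_inner_smul_right, real_inner_self_eq_norm_sq, inner_I_mul_self, sub_zero]
  rw [timeDeriv_energyDensity (by linarith) hu.contDiff, spaceDeriv_energyFlux hf hu.contDiff,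
    hflux, hgrad, hwork, energySink, hpow]
  ring

end IsForcedDampedNLSSolution

/-- The density of the energy supplied by the forcing, after Young's inequality has absorbed the
dependence on the solution into the damping. -/
noncomputable def forcingDensity (p γ : ℝ) (f : ℝ → ℂ) (x : ℝ) : ℝ :=
  1 / (2 * γ) * ‖f x‖ ^ 2 + 1 / (2 * γ) * ‖deriv f x‖ ^ 2 + (2 / γ) ^ p * ‖f x‖ ^ (p + 1)

/-- The bound for the integral of the forcing density over a period `[0, L]` in terms of
`F₀ = ∫ |f|²` and `F₁ = ∫ |f'|²`; the quantity under the root is the Sobolev bound for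
`sup |f|²`. -/
noncomputable def forcingBound (p γ L F₀ F₁ : ℝ) : ℝ :=
  1 / (2 * γ) * F₀ + 1 / (2 * γ) * F₁ +
    L * ((2 / γ) ^ p * √((1 + 1 / L) * F₀ + F₁) ^ (p + 1))

lemma continuous_forcingDensity (hp : 0 < p) (hf : ContDiff ℝ 1 f) :
    Continuous (forcingDensity p γ f) := by
  have hc : Continuous f := hf.continuous
  have hpow : Continuous fun x => ‖f x‖ ^ (p + 1) :=
    hc.norm.rpow_const fun _ => .inr (by linarith)
  unfold forcingDensity
  fun_prop

lemma integral_forcingDensity_le (hp : 0 < p) (hγ : 0 < γ) (hL : 0 < L) (hf : ContDiff ℝ 1 f) :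
    ∫ x in 0..L, forcingDensity p γ f x ≤
      forcingBound p γ L (∫ x in 0..L, ‖f x‖ ^ 2) (∫ x in 0..L, ‖deriv f x‖ ^ 2) := by
  set M := (1 + 1 / L) * (∫ x in 0..L, ‖f x‖ ^ 2) + ∫ x in 0..L, ‖deriv f x‖ ^ 2 with hM
  have hc : Continuous f := hf.continuous
  have hsobolev (x : ℝ) (hx : x ∈ Icc 0 L) : ‖f x‖ ≤ √M :=
    Real.le_sqrt_of_sq_le (by simpa [hM] using norm_sq_le_sobolev hf hL hx)
  calc ∫ x in 0..L, forcingDensity p γ f x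
      ≤ ∫ x in 0..L, (1 / (2 * γ) * ‖f x‖ ^ 2 + 1 / (2 * γ) * ‖deriv f x‖ ^ 2 +
          (2 / γ) ^ p * √M ^ (p + 1)) := by
        refine intervalIntegral.integral_mono_on hL.le
          ((continuous_forcingDensity hp hf).intervalIntegrable _ _)
          (Continuous.intervalIntegrable (by fun_prop) _ _) fun x hx => ?_
        unfold forcingDensity
        gcongr
        exact hsobolev x hx
    _ = forcingBound p γ L (∫ x in 0..L, ‖f x‖ ^ 2) (∫ x in 0..L, ‖deriv f x‖ ^ 2) := by
        rw [intervalIntegral.integral_add, intervalIntegral.integral_add,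
          intervalIntegral.integral_const_mul, intervalIntegral.integral_const_mul,
          intervalIntegral.integral_const, sub_zero, smul_eq_mul, forcingBound]
        all_goals exact Continuous.intervalIntegrable (by fun_prop) _ _

lemma mul_energyDensity_le (hp : 1 ≤ p) (hγ : 0 < γ) (t x : ℝ) :
    γ * energyDensity p u t x ≤ energySink p γ f u t x + forcingDensity p γ f x := by
  have neg_inner_le (z v : ℂ) : -⟪z, Complex.I * v⟫_ℝ ≤ ‖z‖ * ‖v‖ := by
    simpa using (neg_le_abs _).trans (abs_real_inner_le_norm z (Complex.I * v))
  have hlin : ‖u t x‖ * ‖f x‖ ≤ γ / 2 * ‖u t x‖ ^ 2 + ‖f x‖ ^ 2 / (2 * γ) :=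
    mul_le_add_sq_div hγ _ _
  have hgrad : -⟪∂ₓ u t x, Complex.I * deriv f x⟫_ℝ ≤
      γ / 2 * ‖∂ₓ u t x‖ ^ 2 + ‖deriv f x‖ ^ 2 / (2 * γ) :=
    (neg_inner_le _ _).trans (mul_le_add_sq_div hγ _ _)
  have hpow : ‖u t x‖ ^ (p - 1) * (‖u t x‖ * ‖f x‖) ≤
      γ / 2 * ‖u t x‖ ^ (p + 1) + (2 / γ) ^ p * ‖f x‖ ^ (p + 1) := by
    have hp₁ : ‖u t x‖ ^ (p - 1) * ‖u t x‖ = ‖u t x‖ ^ p := by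
      rw [← Real.rpow_add_one' (norm_nonneg _) (by linarith), sub_add_cancel]
    rw [← mul_assoc, hp₁, ← one_div_div γ 2]
    exact rpow_mul_le_add_rpow (by positivity) (norm_nonneg _) (norm_nonneg _) (by linarith)
  have hwork : (1 + ‖u t x‖ ^ (p - 1)) * -⟪u t x, Complex.I * f x⟫_ℝ ≤
      (1 + ‖u t x‖ ^ (p - 1)) * (‖u t x‖ * ‖f x‖) := by
    gcongr
    exact neg_inner_le _ _
  have hcoeff : γ * (1 / (p + 1) * ‖u t x‖ ^ (p + 1)) ≤ γ * (1 / 2 * ‖u t x‖ ^ (p + 1)) := by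
    gcongr
    linarith
  unfold energyDensity energySink forcingDensity
  linear_combination hlin + hgrad + hpow + hwork + hcoeff

namespace IsForcedDampedNLSSolution

theorem integral_timeDeriv_energyDensity_le (hu : IsForcedDampedNLSSolution p γ L f u)
    (hp : 1 ≤ p) (hγ : 0 < γ) (hL : 0 < L) (hf : ContDiff ℝ 1 f) (hfper : Periodic f L)
    {t : ℝ} (ht : 0 ≤ t) :
    ∫ x in 0..L, ∂ₜ (energyDensity p u) t x ≤ -γ * energy p L u t +
      forcingBound p γ L (∫ x in 0..L, ‖f x‖ ^ 2) (∫ x in 0..L, ‖deriv f x‖ ^ 2) := by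
  have hp₀ : 0 < p := by linarith
  have he : ContDiff ℝ 1 (uncurry (energyDensity p u)) := contDiff_energyDensity hp₀ hu.contDiff
  have hflux : ContDiff ℝ 1 (energyFlux γ f u t) := contDiff_energyFlux hf hu.contDiff t
  have hce : Continuous (energyDensity p u t) := he.continuous.uncurry_left t
  have hcet : Continuous (∂ₜ (energyDensity p u) t) :=
    (contDiff_timeDeriv (n := 0) (by simpa)).continuous.uncurry_left t
  have hcflux : Continuous (∂ₓ (energyFlux γ f u) t) := hflux.continuous_deriv_one
  have hcforcing : Continuous (forcingDensity p γ f) := continuous_forcingDensity hp₀ hf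
  calc ∫ x in 0..L, ∂ₜ (energyDensity p u) t x
      ≤ ∫ x in 0..L, (∂ₓ (energyFlux γ f u) t x +
          (-γ * energyDensity p u t x + forcingDensity p γ f x)) := by
        refine intervalIntegral.integral_mono_on hL.le (hcet.intervalIntegrable _ _)
          (Continuous.intervalIntegrable (by fun_prop) _ _) fun x _ => ?_
        linarith [hu.timeDeriv_energyDensity_eq hp hf ht x,
          mul_energyDensity_le (f := f) (u := u) hp hγ t x]
    _ = (∫ x in 0..L, ∂ₓ (energyFlux γ f u) t x) +
          (-γ * energy p L u t + ∫ x in 0..L, forcingDensity p γ f x) := by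
        rw [intervalIntegral.integral_add, intervalIntegral.integral_add,
          intervalIntegral.integral_const_mul, energy]
        all_goals exact Continuous.intervalIntegrable (by fun_prop) _ _
    _ = -γ * energy p L u t + ∫ x in 0..L, forcingDensity p γ f x := by
        rw [add_eq_right]
        exact integral_deriv_eq_zero_of_periodic hflux (periodic_energyFlux hfper hu.periodic t)
    _ ≤ _ := by
        gcongr
        exact integral_forcingDensity_le hp₀ hγ hL hf

theorem limsup_le_of_le_energy (hu : IsForcedDampedNLSSolution p γ L f u)
    (hp : 1 ≤ p) (hγ : 0 < γ) (hL : 0 < L) (hf : ContDiff ℝ 1 f) (hfper : Periodic f L)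
    {h : ℝ → ℝ} {c : ℝ} (hc : 0 ≤ c) (hh₀ : ∀ t, 0 ≤ h t) (hh : ∀ t, h t ≤ c * energy p L u t) :
    limsup h atTop ≤ c * (forcingBound p γ L
      (∫ x in 0..L, ‖f x‖ ^ 2) (∫ x in 0..L, ‖deriv f x‖ ^ 2) / γ) :=
  limsup_le_of_hasDerivAt_le_neg_mul_add hγ
    (fun t _ => hasDerivAt_energy (by linarith) hu.contDiff L t)
    (fun _ ht => hu.integral_timeDeriv_energyDensity_le hp hγ hL hf hfper ht) hc hh₀ hh

end IsForcedDampedNLSSolution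

theorem stmt13_general (p : ℝ) (hp : 1 ≤ p) (γ : ℝ) (hγ : 0 < γ) (L : ℝ) (hL : 0 < L) :
    ∃ C : ℝ → ℝ → ℝ, ∀ f : ℝ → ℂ, ContDiff ℝ 1 f → Periodic f L →
      ∀ u : ℝ → ℝ → ℂ, IsForcedDampedNLSSolution p γ L f u →
        limsup (fun t => 1 / 2 * (∫ x in 0..L, ‖∂ₓ u t x‖ ^ 2) +
            1 / (p + 1) * ∫ x in 0..L, ‖u t x‖ ^ (p + 1)) atTop ≤
          C (∫ x in 0..L, ‖f x‖ ^ 2) (∫ x in 0..L, ‖deriv f x‖ ^ 2) ∧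
        limsup (fun t => (∫ x in 0..L, ‖u t x‖ ^ 2) + ∫ x in 0..L, ‖∂ₓ u t x‖ ^ 2) atTop ≤
          C (∫ x in 0..L, ‖f x‖ ^ 2) (∫ x in 0..L, ‖deriv f x‖ ^ 2) := by
  refine ⟨fun F₀ F₁ => 2 * (forcingBound p γ L F₀ F₁ / γ), fun f hf hfper u hu => ?_⟩
  have hmass (t : ℝ) : 0 ≤ ∫ x in 0..L, ‖u t x‖ ^ 2 :=
    intervalIntegral.integral_nonneg hL.le fun x _ => by positivity
  have hgrad (t : ℝ) : 0 ≤ ∫ x in 0..L, ‖∂ₓ u t x‖ ^ 2 :=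
    intervalIntegral.integral_nonneg hL.le fun x _ => by positivity
  have hpot (t : ℝ) : 0 ≤ 1 / (p + 1) * ∫ x in 0..L, ‖u t x‖ ^ (p + 1) :=
    mul_nonneg (by positivity) (intervalIntegral.integral_nonneg hL.le fun x _ => by positivity)
  have henergy (t : ℝ) := energy_eq (p := p) (by linarith) (hu.contDiff.of_le one_le_two) L t
  constructor <;> refine hu.limsup_le_of_le_energy hp hγ hL hf hfper zero_le_two ?_ ?_ <;>
    intro t <;> linarith [hmass t, hgrad t, hpot t, henergy t]

end ForcedDampedNLS

end

/-- Absorbing set in `H¹(𝕋)` for the periodic forced–damped defocusing p-NLS: there is a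
constant depending only on `p`, `γ`, `∫|f|²` and `∫|f'|²` bounding
`limsup_{t→∞} (½∫|∂ₓu|² + (1/(p+1))∫|u|^{p+1})` and hence
`limsup_{t→∞} (∫|u|² + ∫|∂ₓu|²)`, for every `f` and every global classical solution `u`. -/
theorem stmt13 (p : ℕ) (hp : Odd p) (hp5 : 5 ≤ p) (γ : ℝ) (hγ : 0 < γ) :
    ∃ C : ℝ → ℝ → ℝ,
      ∀ f : ℝ → ℂ, ContDiff ℝ 1 f → Function.Periodic f (2 * Real.pi) →
      ∀ u : ℝ → ℝ → ℂ, ContDiff ℝ (⊤ : ℕ∞) (fun q : ℝ × ℝ => u q.1 q.2) →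
        (∀ t x : ℝ, u t (x + 2 * Real.pi) = u t x) →
        (∀ t : ℝ, 0 ≤ t → ∀ x : ℝ,
          Complex.I * deriv (fun r => u r x) t
            + deriv (deriv (fun y => u t y)) x
            - (‖u t x‖ : ℂ) ^ (p - 1) * u t x
            + Complex.I * (γ : ℂ) * u t x = f x) →
        (Filter.limsup (fun t : ℝ =>
              (1/2) * (∫ x in (0:ℝ)..(2 * Real.pi), ‖deriv (fun y => u t y) x‖^2)
              + (1/((p:ℝ) + 1)) * ∫ x in (0:ℝ)..(2 * Real.pi), ‖u t x‖^(p+1)) Filter.atTop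
            ≤ C (∫ x in (0:ℝ)..(2 * Real.pi), ‖f x‖^2)
                (∫ x in (0:ℝ)..(2 * Real.pi), ‖deriv f x‖^2))
        ∧ (Filter.limsup (fun t : ℝ =>
              (∫ x in (0:ℝ)..(2 * Real.pi), ‖u t x‖^2)
              + ∫ x in (0:ℝ)..(2 * Real.pi), ‖deriv (fun y => u t y) x‖^2) Filter.atTop
            ≤ C (∫ x in (0:ℝ)..(2 * Real.pi), ‖f x‖^2)
                (∫ x in (0:ℝ)..(2 * Real.pi), ‖deriv f x‖^2)) := by
  have hp₁ : (p : ℝ) - 1 = (p - 1 : ℕ) := by push_cast [show 1 ≤ p by omega]; rfl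
  obtain ⟨C, hC⟩ := stmt13_general p (by norm_cast; omega) γ hγ (2 * Real.pi) Real.two_pi_pos
  refine ⟨C, fun f hf hfper u hu huper heq => ?_⟩
  have hsol : IsForcedDampedNLSSolution p γ (2 * Real.pi) f u :=
    ⟨contDiff_infty.1 hu 2, huper, fun t ht x => by
      simp only [hp₁, Real.rpow_natCast, Complex.ofReal_pow]
      exact heq t ht x⟩
  exact_mod_cast hC f hf hfper u hsol
end
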